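/- arXiv:2309.15322 — 2 statements merged into one kernel-verified Lean document; each statement's English description precedes it below -/
import Mathlib

section
/- There exists a constant C > 0 with the following property. Let n, k be positive integers, let each of n vertices be assigned independently and uniformly at random to one of k clusters, and let 0 ≤ q < p ≤ 1 with σ² := max{p(1−p), q(1−q)}. If σ² ≥ C·log n / n and n ≥ C·k·((√(kp)·(log n)⁶ + √(log n))/(p−q))², then with probability at least 1 − C/n (over the random partition and the random graph) the following separation holds with Δ := 0.8·(p−q)·√(n/k): for all vertices u, v, if u and v lie in the same cluster then ‖P_{Ĝ_k}Ĝ_u − P_{Ĝ_k}Ĝ_v‖ ≤ Δ/4, and if u and v lie in different clusters then ‖P_{Ĝ_k}Ĝ_u − P_{Ĝ_k}Ĝ_v‖ ≥ Δ. (Consequently the vanilla-SVD algorithm, which runs ClusterByDistance on the representation ρ(u) = P_{Ĝ_k}Ĝ_u, recovers all clusters.) -/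
open MeasureTheory ProbabilityTheory Matrix Finset

namespace SBM

/-- Euclidean norm of a vector. -/
noncomputable def enorm {m : Type*} [Fintype m] (x : m → ℝ) : ℝ :=
  Real.sqrt (∑ i, x i ^ 2)

/-- Spectral (ℓ²-operator) norm of a matrix. -/
noncomputable def specNorm {n : ℕ} (A : Matrix (Fin n) (Fin n) ℝ) : ℝ :=
  ‖Matrix.toEuclideanCLM (𝕜 := ℝ) A‖

/-- The `2 → ∞` norm: maximal Euclidean norm of a row. -/
noncomputable def n2i {n : ℕ} (A : Matrix (Fin n) (Fin n) ℝ) : ℝ :=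
  ⨆ i : Fin n, enorm (A i)

/-- The mean matrix `G` of the SSBM with cluster assignment `cl`. -/
def meanMatrix (n k : ℕ) (p q : ℝ) (cl : Fin n → Fin k) : Matrix (Fin n) (Fin n) ℝ :=
  Matrix.of fun u v => if cl u = cl v then p else q

/-- The size of cluster `i`. -/
def clusterSize {n k : ℕ} (cl : Fin n → Fin k) (i : Fin k) : ℕ :=
  (Finset.univ.filter fun v => cl v = i).card

/-- The partition is balanced: every cluster size is within a `1 ± 1/(16 log n)` factor
of `n / k`. -/
noncomputable def Balanced (n k : ℕ) (cl : Fin n → Fin k) : Prop :=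
  ∀ i : Fin k,
    (1 - 1 / (16 * Real.log n)) * ((n : ℝ) / k) ≤ (clusterSize cl i : ℝ) ∧
    (clusterSize cl i : ℝ) ≤ (1 + 1 / (16 * Real.log n)) * ((n : ℝ) / k)

/-- `lam, v` is a spectral decomposition of `A`: eigenvalues in non-increasing order with
an orthonormal eigenbasis. -/
def IsSpectralDecomp {n : ℕ} (A : Matrix (Fin n) (Fin n) ℝ)
    (lam : Fin n → ℝ) (v : Fin n → Fin n → ℝ) : Prop :=
  Antitone lam ∧
  (∀ i j, dotProduct (v i) (v j) = if i = j then (1 : ℝ) else 0) ∧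
  A = ∑ i, lam i • Matrix.vecMulVec (v i) (v i)

/-- Orthogonal projection onto the span of the top `k` eigenvectors `v 0, …, v (k-1)`. -/
noncomputable def projTop {n : ℕ} (k : ℕ) (v : Fin n → Fin n → ℝ) :
    Matrix (Fin n) (Fin n) ℝ :=
  ∑ i ∈ Finset.univ.filter (fun i : Fin n => (i : ℕ) < k), Matrix.vecMulVec (v i) (v i)

/-- The column of `A` indexed by `u`. -/
def column {n : ℕ} (A : Matrix (Fin n) (Fin n) ℝ) (u : Fin n) : Fin n → ℝ :=
  fun i => A i u

/-- `ψ(M) = A·M² + B·M` where `A = -1/(λ₁μ)`, `B = 1/λ₁ + 1/μ`. -/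
noncomputable def psiM {n : ℕ} (lam1 mu : ℝ) (M : Matrix (Fin n) (Fin n) ℝ) :
    Matrix (Fin n) (Fin n) ℝ :=
  (-(1 / (lam1 * mu))) • (M * M) + (1 / lam1 + 1 / mu) • M

/-- `φ(M) = ψ(M)^r`. -/
noncomputable def phiM {n : ℕ} (lam1 mu : ℝ) (r : ℕ) (M : Matrix (Fin n) (Fin n) ℝ) :
    Matrix (Fin n) (Fin n) ℝ :=
  psiM lam1 mu M ^ r

/-- `ψ(t) = A·t² + B·t` where `A = -1/(λ₁μ)`, `B = 1/λ₁ + 1/μ`. -/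
noncomputable def psiR (lam1 mu t : ℝ) : ℝ :=
  (-(1 / (lam1 * mu))) * t ^ 2 + (1 / lam1 + 1 / mu) * t

/-- `φ(t) = ψ(t)^r`. -/
noncomputable def phiR (lam1 mu : ℝ) (r : ℕ) (t : ℝ) : ℝ := psiR lam1 mu t ^ r

end SBM

namespace SBM

/-- Index type for the (unordered) edges: pairs `(u, v)` with `u ≤ v`. -/
def EIdx (n : ℕ) := {e : Fin n × Fin n // e.1 ≤ e.2}

/-- The unordered pair `{u, v}` as an element of `EIdx n`. -/
def symPair {n : ℕ} (u v : Fin n) : EIdx n :=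
  if h : u ≤ v then ⟨(u, v), h⟩ else ⟨(v, u), le_of_not_ge h⟩

/-- The SSBM noise matrix `E` built from the cluster assignment `cl` and the i.i.d.
uniform-`[0,1)` edge variables `U`: entry `E_{uv}` equals `1 − G_{uv}` with probability
`G_{uv}` and `−G_{uv}` with probability `1 − G_{uv}`, symmetric, and independent over
`u ≤ v`. -/
noncomputable def noiseOf {n k : ℕ} (p q : ℝ) (cl : Fin n → Fin k) (U : EIdx n → ℝ) :
    Matrix (Fin n) (Fin n) ℝ :=
  Matrix.of fun u v =>
    if U (symPair u v) < meanMatrix n k p q cl u v then 1 - meanMatrix n k p q cl u v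
    else -(meanMatrix n k p q cl u v)

/-- Codomains of the underlying independent random variables: cluster labels and
uniform edge variables. -/
def mixType (n k : ℕ) : Fin n ⊕ EIdx n → Type
  | Sum.inl _ => Fin k
  | Sum.inr _ => ℝ

/-- The measurable-space structures on `mixType`. -/
def mixMS (n k : ℕ) : ∀ i, MeasurableSpace (mixType n k i)
  | Sum.inl _ => (inferInstance : MeasurableSpace (Fin k))
  | Sum.inr _ => (inferInstance : MeasurableSpace ℝ)

/-- The combined family of random variables (cluster labels and edge variables). -/
def mixFam {Ω : Type*} {n k : ℕ} (cl : Ω → Fin n → Fin k) (U : Ω → EIdx n → ℝ) :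
    ∀ i : Fin n ⊕ EIdx n, Ω → mixType n k i
  | Sum.inl v => fun ω => cl ω v
  | Sum.inr e => fun ω => U ω e

end SBM


namespace SBM

open scoped RealInnerProductSpace

section Abstract
variable {n : ℕ} {H : Type*} [NormedAddCommGroup H] [InnerProductSpace ℝ H]

/-- Upper Rayleigh bound on the orthogonal complement of the first eigenvectors. -/
lemma rayleigh_upper (b : OrthonormalBasis (Fin n) ℝ H) (lam : Fin n → ℝ) (hlam : Antitone lam)
    (T : H →ₗ[ℝ] H) (hT : ∀ i, T (b i) = lam i • b i) (i : Fin n) (x : H)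
    (hx : ∀ j, j < i → ⟪b j, x⟫ = 0) : ⟪T x, x⟫ ≤ lam i * ‖x‖ ^ 2 := by
  have h1 : T x = ∑ j, (⟪b j, x⟫ * lam j) • b j := by
    conv_lhs => rw [← b.sum_repr' x]
    simp [map_sum, hT, smul_smul]
  rw [h1, sum_inner, ← b.sum_sq_norm_inner_right x, Finset.mul_sum]
  apply Finset.sum_le_sum
  intro j _
  rw [inner_smul_left]
  simp only [conj_trivial, Real.norm_eq_abs, sq_abs]
  rcases lt_or_ge j i with h | h
  · simp [hx j h]
  · nlinarith [hlam h, sq_nonneg (⟪b j, x⟫ : ℝ)]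

lemma rayleigh_lower (b : OrthonormalBasis (Fin n) ℝ H) (lam : Fin n → ℝ) (hlam : Antitone lam)
    (T : H →ₗ[ℝ] H) (hT : ∀ i, T (b i) = lam i • b i) (i : Fin n) (x : H)
    (hx : ∀ j, i < j → ⟪b j, x⟫ = 0) : lam i * ‖x‖ ^ 2 ≤ ⟪T x, x⟫ := by
  have h1 : T x = ∑ j, (⟪b j, x⟫ * lam j) • b j := by
    conv_lhs => rw [← b.sum_repr' x]
    simp [map_sum, hT, smul_smul]
  rw [h1, sum_inner, ← b.sum_sq_norm_inner_right x, Finset.mul_sum]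
  apply Finset.sum_le_sum
  intro j _
  rw [inner_smul_left]
  simp only [conj_trivial, Real.norm_eq_abs, sq_abs]
  rcases lt_or_ge i j with h | h
  · simp [hx j h]
  · nlinarith [hlam h, sq_nonneg (⟪b j, x⟫ : ℝ)]

lemma abs_inner_op (E : H →ₗ[ℝ] H) (τ : ℝ) (hE : ∀ x, ‖E x‖ ≤ τ * ‖x‖) (x : H) :
    |⟪E x, x⟫| ≤ τ * ‖x‖ ^ 2 := by
  calc |⟪E x, x⟫| ≤ ‖E x‖ * ‖x‖ := abs_real_inner_le_norm _ _
    _ ≤ (τ * ‖x‖) * ‖x‖ := by gcongr; exact hE x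
    _ = _ := by ring

lemma eig_lower {k : ℕ} (b : OrthonormalBasis (Fin n) ℝ H) (lam : Fin n → ℝ) (hlam : Antitone lam)
    (G E : H →ₗ[ℝ] H) (hT : ∀ i, (G + E) (b i) = lam i • b i) (τ μ : ℝ)
    (hE : ∀ x, ‖E x‖ ≤ τ * ‖x‖) (Z : (Fin k → ℝ) →ₗ[ℝ] H) (hZi : Function.Injective Z)
    (hZ : ∀ y, μ * ‖Z y‖ ^ 2 ≤ ⟪G (Z y), Z y⟫) (i : Fin n) (hi : (i : ℕ) < k) :
    μ - τ ≤ lam i := by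
  let f : (Fin k → ℝ) →ₗ[ℝ] (Fin (i : ℕ) → ℝ) :=
    LinearMap.pi fun j => (innerₛₗ ℝ (b (Fin.castLE i.2.le j))).comp Z
  have hf : LinearMap.ker f ≠ ⊥ := f.ker_ne_bot_of_finrank_lt (by simpa using hi)
  obtain ⟨y, hy, hy0⟩ := (Submodule.ne_bot_iff _).1 hf
  have hpos : 0 < ‖Z y‖ ^ 2 := by
    have : Z y ≠ 0 := fun h => hy0 (hZi (by simpa using h))
    positivity
  have hub := rayleigh_upper b lam hlam (G + E) hT i (Z y) (by
    intro j hj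
    have := congrFun (LinearMap.mem_ker.1 hy) ⟨j, hj⟩
    simpa [f] using this)
  rw [LinearMap.add_apply, inner_add_left] at hub
  have h1 := hZ y
  have h2 := (abs_le.1 (abs_inner_op E τ hE (Z y))).1
  have : (μ - τ) * ‖Z y‖ ^ 2 ≤ lam i * ‖Z y‖ ^ 2 := by linarith
  exact le_of_mul_le_mul_right this hpos

lemma eig_upper {k : ℕ} (b : OrthonormalBasis (Fin n) ℝ H) (lam : Fin n → ℝ) (hlam : Antitone lam)
    (G E : H →ₗ[ℝ] H) (hT : ∀ i, (G + E) (b i) = lam i • b i) (τ : ℝ)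
    (hE : ∀ x, ‖E x‖ ≤ τ * ‖x‖) (Zt : H →ₗ[ℝ] (Fin k → ℝ)) (hZt : ∀ x, Zt x = 0 → G x = 0)
    (hG : ∀ x, 0 ≤ ⟪G x, x⟫)
    (i : Fin n) (hi : k ≤ (i : ℕ)) : |lam i| ≤ τ := by
  rw [abs_le]
  constructor
  · have h0 : ⟪(G + E) (b i), b i⟫ = lam i := by
      rw [hT, inner_smul_left]; simp
    rw [LinearMap.add_apply, inner_add_left] at h0
    have h2 := (abs_le.1 (abs_inner_op E τ hE (b i))).1
    have h3 := hG (b i)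
    simp at h2
    linarith
  · let g : (Fin ((i : ℕ) + 1) → ℝ) →ₗ[ℝ] H :=
      Fintype.linearCombination ℝ (fun j : Fin ((i : ℕ) + 1) => b (Fin.castLE i.2 j))
    have hgi : ∀ c j, ⟪b j, g c⟫ = if h : (j : ℕ) < i + 1 then c ⟨j, h⟩ else 0 := by
      intro c j
      simp only [g, Fintype.linearCombination_apply, inner_sum, inner_smul_right,
        b.inner_eq_ite]
      split_ifs with h
      · rw [Finset.sum_eq_single ⟨j, h⟩]
        · simp
        · intro b' _ hb'
          rw [if_neg]; simp
          intro hh; apply hb'; ext; simp [hh]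
        · simp
      · apply Finset.sum_eq_zero
        intro b' _
        rw [if_neg]; simp
        intro hh; apply h; rw [hh]; exact b'.2
    let f := Zt.comp g
    have hf : LinearMap.ker f ≠ ⊥ := f.ker_ne_bot_of_finrank_lt (by simp; omega)
    obtain ⟨c, hc, hc0⟩ := (Submodule.ne_bot_iff _).1 hf
    have hGx : G (g c) = 0 := hZt _ (LinearMap.mem_ker.1 hc)
    have hpos : 0 < ‖g c‖ ^ 2 := by
      have : g c ≠ 0 := by
        intro h
        apply hc0
        funext j
        have := hgi c (Fin.castLE i.2 j)
        rw [h] at this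
        simp at this
        simpa using (this (Nat.le_of_lt_succ j.2)).symm
      positivity
    have hlb := rayleigh_lower b lam hlam (G + E) hT i (g c) (by
      intro j hj
      rw [hgi, dif_neg]
      have : (i : ℕ) < j := hj
      omega)
    rw [LinearMap.add_apply, hGx, zero_add] at hlb
    have h2 := (abs_le.1 (abs_inner_op E τ hE (g c))).2
    exact le_of_mul_le_mul_right (hlb.trans h2) hpos

end Abstract
end SBM


namespace SBM

open scoped RealInnerProductSpace

section Abstract2
variable {n : ℕ} {H : Type*} [NormedAddCommGroup H] [InnerProductSpace ℝ H]

/-- `∑_{i<k} c_i ⟪b_i, x⟫ b_i`. -/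
noncomputable def topFun (k : ℕ) (b : OrthonormalBasis (Fin n) ℝ H) (c : Fin n → ℝ) (x : H) : H :=
  ∑ i ∈ Finset.univ.filter (fun i : Fin n => (i : ℕ) < k), (c i * ⟪b i, x⟫) • b i

lemma inner_topFun (k : ℕ) (b : OrthonormalBasis (Fin n) ℝ H) (c : Fin n → ℝ) (x : H) (j : Fin n) :
    ⟪b j, topFun k b c x⟫ = if (j : ℕ) < k then c j * ⟪b j, x⟫ else 0 := by
  simp only [topFun, inner_sum, inner_smul_right, b.inner_eq_ite]
  simp [Finset.sum_ite_eq, Finset.sum_filter]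

lemma norm_le_of_coef (b : OrthonormalBasis (Fin n) ℝ H) (x y : H) (t : ℝ) (ht : 0 ≤ t)
    (h : ∀ j, |⟪b j, x⟫| ≤ t * |⟪b j, y⟫|) : ‖x‖ ≤ t * ‖y‖ := by
  rw [← abs_of_nonneg (norm_nonneg x), ← abs_of_nonneg (mul_nonneg ht (norm_nonneg y)),
    ← sq_le_sq, mul_pow, ← b.sum_sq_norm_inner_right x, ← b.sum_sq_norm_inner_right y,
    Finset.mul_sum]
  apply Finset.sum_le_sum
  intro j _
  rw [← mul_pow]
  simp only [Real.norm_eq_abs]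
  exact pow_le_pow_left₀ (abs_nonneg _) (h j) 2

lemma ext_coef (b : OrthonormalBasis (Fin n) ℝ H) (x y : H)
    (h : ∀ j, ⟪b j, x⟫ = ⟪b j, y⟫) : x = y := by
  rw [← b.sum_repr' x, ← b.sum_repr' y]
  simp [h]

lemma inner_T (b : OrthonormalBasis (Fin n) ℝ H) (lam : Fin n → ℝ)
    (T : H →ₗ[ℝ] H) (hT : ∀ i, T (b i) = lam i • b i) (x : H) (j : Fin n) :
    ⟪b j, T x⟫ = lam j * ⟪b j, x⟫ := by
  have h1 : T x = ∑ j, (⟪b j, x⟫ * lam j) • b j := by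
    conv_lhs => rw [← b.sum_repr' x]
    simp [map_sum, hT, smul_smul]
  rw [h1, inner_sum]
  simp [inner_smul_right, b.inner_eq_ite, mul_comm]

lemma pow_norm_le (E : H →ₗ[ℝ] H) (τ : ℝ) (hτ : 0 ≤ τ) (hE : ∀ x, ‖E x‖ ≤ τ * ‖x‖) (a : ℕ) (x : H) :
    ‖(E ^ a) x‖ ≤ τ ^ a * ‖x‖ := by
  induction a with
  | zero => simp
  | succ a ih =>
    rw [pow_succ', Module.End.mul_apply]
    calc _ ≤ τ * ‖(E ^ a) x‖ := hE _
      _ ≤ τ * (τ ^ a * ‖x‖) := by gcongr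
      _ = _ := by ring

lemma tail_term {k : ℕ} (b : OrthonormalBasis (Fin n) ℝ H) (lam : Fin n → ℝ)
    (T G E : H →ₗ[ℝ] H) (hTE : T = G + E) (hT : ∀ i, T (b i) = lam i • b i) (τ lo : ℝ)
    (hτ : 0 ≤ τ) (hlo : 0 < lo) (hτlo : τ ≤ lo)
    (hlam : ∀ i : Fin n, (i : ℕ) < k → lo ≤ lam i)
    (hE : ∀ x, ‖E x‖ ≤ τ * ‖x‖) (hEs : ∀ x y, ⟪E x, y⟫ = ⟪x, E y⟫)
    (A : ℕ) (s : ℕ → ℝ) (e : H) 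
    (hs : ∀ a, 1 ≤ a → a ≤ A → ∀ y, |⟪G y, (E ^ a) e⟫| ≤ ‖G y‖ * s a)
    (hs0 : ∀ a, 0 ≤ s a) :
    ‖topFun k b 1 (E e)‖ ≤
      (∑ j ∈ Finset.range A, 2 * lo⁻¹ ^ j * s (j + 1)) + lo⁻¹ ^ A * τ ^ (A + 1) * ‖e‖ := by
  set z := E e with hz
  let y : ℕ → H := fun j => topFun k b (fun i => (lam i)⁻¹ ^ j) z
  have hy0 : y 0 = topFun k b 1 z := by
    simp only [y, pow_zero]; rfl
  have hTy : ∀ j, T (y (j + 1)) = y j := by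
    intro j
    apply ext_coef b
    intro i
    rw [inner_T b lam T hT, inner_topFun, inner_topFun]
    split_ifs with h
    · have : lam i ≠ 0 := (hlo.trans_le (hlam i h)).ne'
      rw [pow_succ]
      field_simp
    · simp
  have hyn : ∀ j, ‖y j‖ ≤ lo⁻¹ ^ j * ‖topFun k b 1 z‖ := by
    intro j
    apply norm_le_of_coef b _ _ _ (by positivity)
    intro i
    rw [inner_topFun, inner_topFun]
    split_ifs with h
    · have h1 := hlam i h
      have : 0 < lam i := hlo.trans_le h1
      rw [abs_mul, Pi.one_apply, one_mul, abs_of_pos (by positivity)]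
      gcongr
    · simp
  have hGy : ∀ j, ‖G (y (j + 1))‖ ≤ 2 * lo⁻¹ ^ j * ‖topFun k b 1 z‖ := by
    intro j
    have h1 : G (y (j + 1)) = y j - E (y (j + 1)) := by
      rw [← hTy j, hTE]; simp
    rw [h1]
    calc _ ≤ ‖y j‖ + ‖E (y (j + 1))‖ := norm_sub_le _ _
      _ ≤ lo⁻¹ ^ j * ‖topFun k b 1 z‖ + τ * (lo⁻¹ ^ (j + 1) * ‖topFun k b 1 z‖) := by
        gcongr
        · exact hyn j
        · exact (hE _).trans (by gcongr; exact hyn _)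
      _ ≤ lo⁻¹ ^ j * ‖topFun k b 1 z‖ + lo * (lo⁻¹ ^ (j + 1) * ‖topFun k b 1 z‖) := by
        gcongr
      _ = _ := by rw [pow_succ]; field_simp; ring
  have htel : ∀ A, ⟪y 0, z⟫ = (∑ j ∈ Finset.range A, ⟪G (y (j + 1)), (E ^ (j + 1)) e⟫) +
      ⟪y A, (E ^ (A + 1)) e⟫ := by
    intro A
    induction A with
    | zero => simp [hz]
    | succ A ih =>
      rw [ih, Finset.sum_range_succ, add_assoc]
      congr 1
      rw [← hTy A, hTE, LinearMap.add_apply, inner_add_left, hEs, pow_succ' E (A + 1),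
        Module.End.mul_apply]
  have hPP : ⟪y 0, z⟫ = ‖topFun k b 1 z‖ ^ 2 := by
    rw [hy0, ← b.sum_sq_norm_inner_right, ← b.sum_inner_mul_inner]
    apply Finset.sum_congr rfl
    intro i _
    rw [real_inner_comm, inner_topFun]
    split_ifs <;> simp [sq]
  rcases eq_or_lt_of_le (norm_nonneg (topFun k b 1 z)) with h0 | h0
  · rw [← h0]
    have := Finset.sum_nonneg (s := Finset.range A) (f := fun j => 2 * lo⁻¹ ^ j * s (j + 1))
      (fun j _ => by have := hs0 (j + 1); positivity)
    positivity
  · have h1 : ‖topFun k b 1 z‖ ^ 2 ≤ ((∑ j ∈ Finset.range A, 2 * lo⁻¹ ^ j * s (j + 1)) +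
        lo⁻¹ ^ A * τ ^ (A + 1) * ‖e‖) * ‖topFun k b 1 z‖ := by
      rw [← hPP, htel A, add_mul, Finset.sum_mul]
      apply add_le_add
      · apply Finset.sum_le_sum
        intro j hj
        have hj := Finset.mem_range.1 hj
        calc _ ≤ _ := le_abs_self _
          _ ≤ _ := hs (j + 1) (by omega) (by omega) _
          _ ≤ (2 * lo⁻¹ ^ j * ‖topFun k b 1 z‖) * s (j + 1) := by
            gcongr
            · exact hs0 _
            · exact hGy j
          _ = _ := by ring
      · calc _ ≤ _ := real_inner_le_norm _ _
          _ ≤ (lo⁻¹ ^ A * ‖topFun k b 1 z‖) * (τ ^ (A + 1) * ‖e‖) := by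
            gcongr
            · exact hyn A
            · exact pow_norm_le E τ hτ hE _ _
          _ = _ := by ring
    rw [sq] at h1
    exact le_of_mul_le_mul_right h1 h0

lemma head_term {k : ℕ} (b : OrthonormalBasis (Fin n) ℝ H) (lam : Fin n → ℝ)
    (T G E : H →ₗ[ℝ] H) (hTE : T = G + E) (hT : ∀ i, T (b i) = lam i • b i) (τ : ℝ)
    (hτ : 0 ≤ τ)
    (hlam : ∀ i : Fin n, k ≤ (i : ℕ) → |lam i| ≤ τ)
    (hE : ∀ x, ‖E x‖ ≤ τ * ‖x‖) (h : H) :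
    ‖topFun k b 1 (G h) - G h‖ ≤ 2 * τ * ‖h‖ := by
  have hsub : ∀ x j, ⟪b j, topFun k b 1 x - x⟫ = if (j : ℕ) < k then 0 else - ⟪b j, x⟫ := by
    intro x j
    rw [inner_sub_right, inner_topFun]
    split_ifs <;> simp
  have h1 : topFun k b 1 (G h) - G h = (topFun k b 1 (T h) - T h) - (topFun k b 1 (E h) - E h) := by
    apply ext_coef b
    intro j
    rw [inner_sub_right (𝕜 := ℝ) (b j) (topFun k b 1 (T h) - T h), hsub, hsub, hsub, hTE]
    split_ifs
    · simp
    · simp [inner_add_right]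
  have h2 : ‖topFun k b 1 (T h) - T h‖ ≤ τ * ‖h‖ := by
    apply norm_le_of_coef b _ _ _ hτ
    intro j
    rw [hsub, inner_T b lam T hT]
    split_ifs with hj
    · simp; positivity
    · rw [abs_neg, abs_mul]
      gcongr
      exact hlam j (by omega)
  have h3 : ‖topFun k b 1 (E h) - E h‖ ≤ 1 * ‖E h‖ := by
    apply norm_le_of_coef b _ _ _ zero_le_one
    intro j
    rw [hsub]
    split_ifs with hj
    · simp
    · simp
  rw [h1]
  calc _ ≤ _ := norm_sub_le _ _
    _ ≤ τ * ‖h‖ + τ * ‖h‖ := add_le_add h2 (by linarith [hE h])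
    _ = _ := by ring

lemma topFun_add (k : ℕ) (b : OrthonormalBasis (Fin n) ℝ H) (c : Fin n → ℝ) (x y : H) :
    topFun k b c (x + y) = topFun k b c x + topFun k b c y := by
  simp only [topFun, ← Finset.sum_add_distrib, inner_add_right, mul_add, add_smul]

/-- Abstract deterministic perturbation bound. -/
lemma abstract_main {k : ℕ} (b : OrthonormalBasis (Fin n) ℝ H) (lam : Fin n → ℝ)
    (hanti : Antitone lam) (G E : H →ₗ[ℝ] H)
    (hT : ∀ i, (G + E) (b i) = lam i • b i) (τ μ : ℝ)
    (hτ : 0 < τ) (hμ : 50 * τ ≤ μ)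
    (hE : ∀ x, ‖E x‖ ≤ τ * ‖x‖) (hEs : ∀ x y, ⟪E x, y⟫ = ⟪x, E y⟫)
    (Z : (Fin k → ℝ) →ₗ[ℝ] H) (hZi : Function.Injective Z)
    (hZ : ∀ y, μ * ‖Z y‖ ^ 2 ≤ ⟪G (Z y), Z y⟫)
    (Zt : H →ₗ[ℝ] (Fin k → ℝ)) (hZt : ∀ x, Zt x = 0 → G x = 0)
    (hG : ∀ x, 0 ≤ ⟪G x, x⟫) (δ : ℝ) (hδ : 0 ≤ δ)
    (A : ℕ) (e h : H) (he : ‖e‖ ≤ 1) (hh : ‖h‖ ≤ δ) (hGh : G e = G h)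
    (hs : ∀ a, 1 ≤ a → a ≤ A → ∀ y, |⟪G y, (E ^ a) e⟫| ≤ ‖G y‖ * (δ * τ ^ a))
    (hA : (1 / 2 : ℝ) ^ A ≤ δ) :
    ‖topFun k b 1 ((G + E) e) - G e‖ ≤ 7 * τ * δ := by
  have hlo := eig_lower b lam hanti G E hT τ μ hE Z hZi hZ
  have hup := eig_upper b lam hanti G E hT τ hE Zt hZt hG
  have hlp : 0 < μ - τ := by linarith
  have h1 := head_term b lam (G + E) G E rfl hT τ hτ.le hup hE h
  have h2 := tail_term b lam (G + E) G E rfl hT τ (μ - τ) hτ.le hlp (by linarith) hlo hE hEs A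
    (fun a => δ * τ ^ a) e hs (fun a => by positivity)
  have hr : τ * (μ - τ)⁻¹ ≤ 1 / 2 := by
    rw [← div_eq_mul_inv, div_le_iff₀ hlp]; linarith
  have hr0 : 0 ≤ τ * (μ - τ)⁻¹ := by positivity
  have h3 : (∑ j ∈ Finset.range A, 2 * (μ - τ)⁻¹ ^ j * (δ * τ ^ (j + 1))) ≤ 4 * τ * δ := by
    calc _ ≤ ∑ j ∈ Finset.range A, (2 * τ * δ) * (1 / 2 : ℝ) ^ j := by
          apply Finset.sum_le_sum
          intro j _
          calc _ = (2 * τ * δ) * (τ * (μ - τ)⁻¹) ^ j := by rw [mul_pow]; ring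
            _ ≤ _ := by gcongr
      _ = (2 * τ * δ) * ∑ j ∈ Finset.range A, (1 / 2 : ℝ) ^ j := by rw [Finset.mul_sum]
      _ ≤ (2 * τ * δ) * 2 := by
          gcongr
          exact sum_geometric_two_le A
      _ = _ := by ring
  have h4 : (μ - τ)⁻¹ ^ A * τ ^ (A + 1) * ‖e‖ ≤ τ * δ := by
    calc _ = (τ * (μ - τ)⁻¹) ^ A * τ * ‖e‖ := by rw [mul_pow]; ring
      _ ≤ (1 / 2 : ℝ) ^ A * τ * 1 := by gcongr
      _ ≤ δ * τ * 1 := by gcongr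
      _ = _ := by ring
  have h5 : topFun k b 1 ((G + E) e) - G e = (topFun k b 1 (G h) - G h) + topFun k b 1 (E e) := by
    rw [LinearMap.add_apply, topFun_add, hGh]; abel
  rw [h5]
  calc _ ≤ _ := norm_add_le _ _
    _ ≤ 2 * τ * δ + (4 * τ * δ + τ * δ) := by
      apply add_le_add
      · exact h1.trans (by gcongr)
      · exact h2.trans (add_le_add h3 h4)
    _ = _ := by ring

end Abstract2
end SBM


namespace SBM

open scoped RealInnerProductSpace

section Concrete
variable {n k : ℕ}

lemma enorm_eq (x : Fin n → ℝ) : SBM.enorm x = ‖(WithLp.toLp 2 x : EuclideanSpace ℝ (Fin n))‖ := by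
  rw [EuclideanSpace.norm_eq, SBM.enorm]
  simp

lemma tel_toLp (M : Matrix (Fin n) (Fin n) ℝ) (x : Fin n → ℝ) :
    toEuclideanLin M (WithLp.toLp 2 x) = WithLp.toLp 2 (M *ᵥ x) := rfl

lemma inner_toLp (x y : Fin n → ℝ) :
    ⟪(WithLp.toLp 2 x : EuclideanSpace ℝ (Fin n)), WithLp.toLp 2 y⟫ = ∑ i, x i * y i := by
  simp [PiLp.inner_apply, mul_comm]

lemma nsq_toLp (x : Fin n → ℝ) :
    ‖(WithLp.toLp 2 x : EuclideanSpace ℝ (Fin n))‖ ^ 2 = ∑ i, x i ^ 2 := by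
  rw [EuclideanSpace.norm_sq_eq]
  simp

/-- Cluster sum of a vector. -/
def csum (c : Fin n → Fin k) (x : Fin n → ℝ) (i : Fin k) : ℝ := ∑ w, if c w = i then x w else 0

lemma sum_cl (c : Fin n → Fin k) (f : Fin k → ℝ) (x : Fin n → ℝ) :
    ∑ w, f (c w) * x w = ∑ i, f i * csum c x i := by
  simp only [csum, Finset.mul_sum]
  rw [Finset.sum_comm]
  apply Finset.sum_congr rfl
  intro w _
  simp

lemma csum_one (c : Fin n → Fin k) (i : Fin k) : csum c (fun _ => 1) i = clusterSize c i := by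
  simp [csum, clusterSize]

lemma sum_csum (c : Fin n → Fin k) (x : Fin n → ℝ) : ∑ i, csum c x i = ∑ w, x w := by
  simpa using (sum_cl c (fun _ => 1) x).symm

lemma sum_cl_one (c : Fin n → Fin k) (f : Fin k → ℝ) :
    ∑ w, f (c w) = ∑ i, f i * clusterSize c i := by
  simpa [csum_one] using sum_cl c f (fun _ => 1)

lemma mean_mulVec (p q : ℝ) (c : Fin n → Fin k) (x : Fin n → ℝ) :
    meanMatrix n k p q c *ᵥ x = fun w => (p - q) * csum c x (c w) + q * ∑ i, csum c x i := by
  funext w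
  rw [sum_csum]
  simp only [mulVec, dotProduct, meanMatrix, Matrix.of_apply, csum, Finset.mul_sum,
    ← Finset.sum_add_distrib]
  apply Finset.sum_congr rfl
  intro u _
  by_cases h : c w = c u
  · simp [h]; ring
  · rw [if_neg h, if_neg (fun h' => h h'.symm)]; ring

lemma csum_cl (c : Fin n → Fin k) (y : Fin k → ℝ) (i : Fin k) :
    csum c (fun w => y (c w)) i = y i * clusterSize c i := by
  rw [← csum_one, csum, csum, Finset.mul_sum]
  apply Finset.sum_congr rfl
  intro w _
  split_ifs with h <;> simp [h]

lemma pow_single (N : Matrix (Fin n) (Fin n) ℝ) (u : Fin n) (a : ℕ) :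
    ((toEuclideanLin N) ^ a) (WithLp.toLp 2 (Pi.single u 1)) = WithLp.toLp 2 (fun i => (N ^ a) i u) := by
  induction a with
  | zero =>
    simp only [pow_zero, Module.End.one_apply]
    congr 1
    funext i
    simp [Matrix.one_apply, Pi.single_apply]
  | succ a ih =>
    rw [pow_succ', Module.End.mul_apply, ih, tel_toLp]
    congr 1
    funext i
    rw [pow_succ', Matrix.mul_apply]
    rfl

lemma projTop_mulVec (v : Fin n → Fin n → ℝ) (b : OrthonormalBasis (Fin n) ℝ (EuclideanSpace ℝ (Fin n)))
    (hb : ∀ i, b i = WithLp.toLp 2 (v i)) (x : Fin n → ℝ) :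
    (WithLp.toLp 2 ((projTop k v) *ᵥ x) : EuclideanSpace ℝ (Fin n)) = topFun k b 1 (WithLp.toLp 2 x) := by
  rw [topFun, projTop, Matrix.sum_mulVec, WithLp.toLp_sum]
  apply Finset.sum_congr rfl
  intro i _
  rw [hb, inner_toLp, ← WithLp.toLp_smul]
  congr 1
  funext j
  simp only [mulVec, dotProduct, vecMulVec_apply, Pi.one_apply, one_mul, Pi.smul_apply,
    smul_eq_mul, Finset.sum_mul]
  apply Finset.sum_congr rfl
  intro l _
  ring

lemma exists_basis (hn : 0 < n) (v : Fin n → Fin n → ℝ)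
    (hv : ∀ i j, dotProduct (v i) (v j) = if i = j then (1 : ℝ) else 0) :
    ∃ b : OrthonormalBasis (Fin n) ℝ (EuclideanSpace ℝ (Fin n)), ∀ i, b i = WithLp.toLp 2 (v i) := by
  have : Nonempty (Fin n) := ⟨⟨0, hn⟩⟩
  have ho : Orthonormal ℝ (fun i => (WithLp.toLp 2 (v i) : EuclideanSpace ℝ (Fin n))) := by
    rw [orthonormal_iff_ite]
    intro i j
    rw [inner_toLp]
    exact hv i j
  have hcard : Fintype.card (Fin n) = Module.finrank ℝ (EuclideanSpace ℝ (Fin n)) := by simp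
  let B := basisOfOrthonormalOfCardEqFinrank ho hcard
  have hB : (B : Fin n → EuclideanSpace ℝ (Fin n)) = fun i => WithLp.toLp 2 (v i) :=
    coe_basisOfOrthonormalOfCardEqFinrank ho hcard
  refine ⟨B.toOrthonormalBasis (by rw [hB]; exact ho), ?_⟩
  intro i
  rw [Module.Basis.coe_toOrthonormalBasis, hB]

lemma col_bound (hn : 0 < n) (hk : 0 < k) (p q : ℝ) (hq : 0 ≤ q) (hpq : q < p) (c : Fin n → Fin k)
    (hc : ∀ i, (n : ℝ) / (2 * k) ≤ clusterSize c i) (N : Matrix (Fin n) (Fin n) ℝ)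
    (hN : N.IsSymm) (τ : ℝ) (hτ : 0 < τ) (hτ2 : 100 * τ ≤ (p - q) * (n / k))
    (hE : ∀ x : EuclideanSpace ℝ (Fin n), ‖toEuclideanLin N x‖ ≤ τ * ‖x‖)
    (A : ℕ) (hA : (1 / 2 : ℝ) ^ A ≤ Real.sqrt (2 * k / n))
    (hs : ∀ u, ∀ a, 1 ≤ a → a ≤ A → ∑ i, csum c (fun w => (N ^ a) w u) i ^ 2 ≤ τ ^ (2 * a))
    (lam : Fin n → ℝ) (v : Fin n → Fin n → ℝ)
    (hsp : IsSpectralDecomp (meanMatrix n k p q c + N) lam v) (u : Fin n) :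
    ‖(WithLp.toLp 2 ((projTop k v) *ᵥ (column (meanMatrix n k p q c + N) u) -
      column (meanMatrix n k p q c) u) : EuclideanSpace ℝ (Fin n))‖ ≤
      0.1 * (p - q) * Real.sqrt (n / k) := by
  obtain ⟨hanti, hv, hdec⟩ := hsp
  obtain ⟨b, hb⟩ := exists_basis hn v hv
  have hn' : (0 : ℝ) < n := by exact_mod_cast hn
  have hk' : (0 : ℝ) < k := by exact_mod_cast hk
  have hpq' : 0 < p - q := by linarith
  have hcpos : ∀ i, (0 : ℝ) < clusterSize c i := fun i =>
    lt_of_lt_of_le (by positivity) (hc i)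
  set δ := Real.sqrt (2 * k / n) with hδ
  have hδsq : δ ^ 2 = 2 * k / n := Real.sq_sqrt (by positivity)
  have hδ0 : 0 ≤ δ := Real.sqrt_nonneg _
  set G := meanMatrix n k p q c with hG
  have hT : ∀ i, (toEuclideanLin G + toEuclideanLin N) (b i) = lam i • b i := by
    intro i
    rw [← map_add, hdec, hb, tel_toLp, ← WithLp.toLp_smul]
    congr 1
    rw [Matrix.sum_mulVec]
    have : ∀ j, (lam j • vecMulVec (v j) (v j)) *ᵥ v i = if j = i then lam i • v i else 0 := by
      intro j
      funext l
      simp only [mulVec, dotProduct, Matrix.smul_apply, vecMulVec_apply, smul_eq_mul]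
      have h1 : ∑ x, lam j * (v j l * v j x) * v i x = lam j * v j l * (v j ⬝ᵥ v i) := by
        rw [dotProduct, Finset.mul_sum]
        apply Finset.sum_congr rfl
        intro x _; ring
      rw [h1, hv]
      split_ifs with h
      · simp [h]
      · simp
    simp [this]
  have hEs : ∀ x y : EuclideanSpace ℝ (Fin n), ⟪toEuclideanLin N x, y⟫ = ⟪x, toEuclideanLin N y⟫ := by
    intro x y
    have : (toEuclideanLin N).IsSymmetric := by
      rw [Matrix.isSymmetric_toEuclideanLin_iff]
      rw [Matrix.IsHermitian, conjTranspose_eq_transpose_of_trivial]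
      exact hN
    exact this x y
  let Z : (Fin k → ℝ) →ₗ[ℝ] EuclideanSpace ℝ (Fin n) :=
    { toFun := fun y => WithLp.toLp 2 (fun w => y (c w))
      map_add' := fun x y => by ext; simp
      map_smul' := fun r y => by ext; simp }
  let Zt : EuclideanSpace ℝ (Fin n) →ₗ[ℝ] (Fin k → ℝ) :=
    { toFun := fun x => csum c (WithLp.ofLp x)
      map_add' := fun x y => by
        funext i
        simp only [csum, Pi.add_apply, ← Finset.sum_add_distrib]
        apply Finset.sum_congr rfl
        intro w _
        split_ifs <;> simp
      map_smul' := fun r y => by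
        funext i
        simp only [csum, Pi.smul_apply, smul_eq_mul, RingHom.id_apply, Finset.mul_sum]
        apply Finset.sum_congr rfl
        intro w _
        split_ifs <;> simp }
  have hZi : Function.Injective Z := by
    intro x y hxy
    funext i
    have h0 : 0 < clusterSize c i := by exact_mod_cast hcpos i
    obtain ⟨w, hw⟩ := Finset.card_pos.1 h0
    have hw : c w = i := (Finset.mem_filter.1 hw).2
    have := congrArg (fun z : EuclideanSpace ℝ (Fin n) => z w) hxy
    simpa [Z, hw] using this
  have hGin : ∀ x : Fin n → ℝ, ⟪toEuclideanLin G (WithLp.toLp 2 x), WithLp.toLp 2 x⟫ =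
      (p - q) * ∑ i, csum c x i ^ 2 + q * (∑ i, csum c x i) ^ 2 := by
    intro x
    rw [tel_toLp, inner_toLp, hG, mean_mulVec,
      sum_cl c (fun j => (p - q) * csum c x j + q * ∑ i, csum c x i) x]
    simp only [add_mul, Finset.sum_add_distrib, mul_assoc, ← Finset.mul_sum, ← sq]
  have hZ : ∀ y, ((p - q) * (n / (2 * k))) * ‖Z y‖ ^ 2 ≤ ⟪toEuclideanLin G (Z y), Z y⟫ := by
    intro y
    have h1 : Z y = WithLp.toLp 2 (fun w => y (c w)) := rfl
    rw [h1, hGin, nsq_toLp, sum_cl_one c (fun i => y i ^ 2)]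
    have h2 : 0 ≤ q * (∑ i, csum c (fun w => y (c w)) i) ^ 2 := by positivity
    have h3 : (n / (2 * k)) * ∑ i, y i ^ 2 * (clusterSize c i : ℝ) ≤
        ∑ i, csum c (fun w => y (c w)) i ^ 2 := by
      rw [Finset.mul_sum]
      apply Finset.sum_le_sum
      intro i _
      rw [csum_cl]
      calc _ ≤ (clusterSize c i : ℝ) * (y i ^ 2 * (clusterSize c i : ℝ)) := by
            gcongr; exact hc i
        _ = _ := by ring
    calc _ = (p - q) * ((n / (2 * k)) * ∑ i, y i ^ 2 * (clusterSize c i : ℝ)) := by ring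
      _ ≤ (p - q) * ∑ i, csum c (fun w => y (c w)) i ^ 2 := by gcongr
      _ ≤ _ := by linarith
  have hZt : ∀ x, Zt x = 0 → toEuclideanLin G x = 0 := by
    intro x hx
    have hx' : ∀ i, csum c (WithLp.ofLp x) i = 0 := fun i => congrFun hx i
    rw [Matrix.toLpLin_apply, hG, mean_mulVec]
    simp only [hx']
    ext
    simp
  have hGp : ∀ x, 0 ≤ ⟪toEuclideanLin G x, x⟫ := by
    intro x
    have := hGin (WithLp.ofLp x)
    rw [WithLp.toLp_ofLp] at this
    rw [this]
    have : 0 ≤ ∑ i, csum c (WithLp.ofLp x) i ^ 2 := Finset.sum_nonneg fun i _ => sq_nonneg _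
    positivity
  let h : EuclideanSpace ℝ (Fin n) :=
    WithLp.toLp 2 (fun w => (fun i => if i = c u then ((clusterSize c (c u) : ℝ))⁻¹ else 0) (c w))
  have hh : ‖h‖ ≤ δ := by
    apply le_of_sq_le_sq _ hδ0
    rw [nsq_toLp, sum_cl_one c (fun i => (if i = c u then ((clusterSize c (c u) : ℝ))⁻¹ else 0) ^ 2),
      hδsq]
    simp only [ite_pow, ne_eq, OfNat.ofNat_ne_zero, not_false_eq_true, zero_pow, ite_mul, zero_mul,
      Finset.sum_ite_eq', Finset.mem_univ, if_true]
    have h1 := hc (c u)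
    have h2 := hcpos (c u)
    have : ((clusterSize c (c u) : ℝ))⁻¹ ^ 2 * (clusterSize c (c u) : ℝ) = ((clusterSize c (c u) : ℝ))⁻¹ := by
      field_simp
    rw [this]
    calc _ ≤ ((n : ℝ) / (2 * k))⁻¹ := by gcongr
      _ = _ := by rw [inv_div]
  have hGh : toEuclideanLin G (WithLp.toLp 2 (Pi.single u 1)) = toEuclideanLin G h := by
    rw [tel_toLp, tel_toLp, hG, mean_mulVec, mean_mulVec]
    have : csum c (Pi.single u 1) = csum c (fun w => (fun i => if i = c u then ((clusterSize c (c u) : ℝ))⁻¹ else 0) (c w)) := by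
      funext i
      rw [csum_cl c (fun i => if i = c u then ((clusterSize c (c u) : ℝ))⁻¹ else 0)]
      have h1 : csum c (Pi.single u 1) i = if c u = i then 1 else 0 := by
        rw [csum, Finset.sum_eq_single u]
        · simp
        · intro w _ hw
          simp [hw]
        · simp
      rw [h1]
      by_cases h : c u = i
      · subst h
        simp [(hcpos (c u)).ne']
      · rw [if_neg h, if_neg (fun h' => h h'.symm), zero_mul]
    rw [this]
  have hs' : ∀ a, 1 ≤ a → a ≤ A → ∀ y, |⟪toEuclideanLin G y,
      ((toEuclideanLin N) ^ a) (WithLp.toLp 2 (Pi.single u 1))⟫| ≤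
      ‖toEuclideanLin G y‖ * (δ * τ ^ a) := by
    intro a ha1 ha2 y
    obtain ⟨g, hg⟩ : ∃ g : Fin k → ℝ, toEuclideanLin G y = WithLp.toLp 2 (fun w => g (c w)) := by
      refine ⟨fun j => (p - q) * csum c (WithLp.ofLp y) j + q * ∑ i, csum c (WithLp.ofLp y) i, ?_⟩
      rw [Matrix.toLpLin_apply, hG, mean_mulVec]
    rw [hg, pow_single, inner_toLp, sum_cl c g]
    apply abs_le_of_sq_le_sq _ (by positivity)
    have hcs := Finset.sum_mul_sq_le_sq_mul_sq Finset.univ g (csum c (fun w => (N ^ a) w u))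
    have h1 : ∑ i, g i ^ 2 ≤ δ ^ 2 * ‖(WithLp.toLp 2 (fun w => g (c w)) : EuclideanSpace ℝ (Fin n))‖ ^ 2 := by
      rw [nsq_toLp, sum_cl_one c (fun i => g i ^ 2), hδsq, Finset.mul_sum]
      apply Finset.sum_le_sum
      intro i _
      calc g i ^ 2 = (2 * k / n) * (g i ^ 2 * (n / (2 * k))) := by field_simp
        _ ≤ _ := by gcongr; exact hc i
    calc _ ≤ _ := hcs
      _ ≤ (δ ^ 2 * ‖(WithLp.toLp 2 (fun w => g (c w)) : EuclideanSpace ℝ (Fin n))‖ ^ 2) * τ ^ (2 * a) := by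
        gcongr
        exact hs u a ha1 ha2
      _ = _ := by ring
  have hmain := abstract_main b lam hanti (toEuclideanLin G) (toEuclideanLin N) hT τ
    ((p - q) * (n / (2 * k))) hτ (by
      have : (p - q) * ((n : ℝ) / (2 * k)) = (p - q) * (n / k) / 2 := by field_simp
      rw [this]; linarith) hE hEs Z hZi hZ Zt hZt hGp δ hδ0 A (WithLp.toLp 2 (Pi.single u 1)) h
    (by simp) hh hGh hs' hA
  have hcol : ∀ M : Matrix (Fin n) (Fin n) ℝ, toEuclideanLin M (WithLp.toLp 2 (Pi.single u 1)) =
      WithLp.toLp 2 (column M u) := by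
    intro M
    rw [tel_toLp]
    congr 1
    funext i
    simp [column]
  rw [← map_add, hcol, hcol, ← projTop_mulVec v b hb, ← WithLp.toLp_sub] at hmain
  refine hmain.trans ?_
  have hδ2 : δ = Real.sqrt 2 * Real.sqrt (k / n) := by
    rw [hδ, ← Real.sqrt_mul (by norm_num)]; congr 1; ring
  have hkn : Real.sqrt (k / n) * (n / k) = Real.sqrt (n / k) := by
    have h1 : Real.sqrt (k / n) * Real.sqrt (n / k) = 1 := by
      rw [← Real.sqrt_mul (by positivity)]
      have : (k : ℝ) / n * (n / k) = 1 := by field_simp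
      rw [this, Real.sqrt_one]
    have h2 : (n : ℝ) / k = Real.sqrt (n / k) * Real.sqrt (n / k) :=
      (Real.mul_self_sqrt (by positivity)).symm
    calc _ = Real.sqrt (k / n) * (Real.sqrt (n / k) * Real.sqrt (n / k)) := by rw [← h2]
      _ = _ := by rw [← mul_assoc, h1, one_mul]
  have h2 : Real.sqrt 2 ≤ 1.42 := by
    rw [Real.sqrt_le_left (by norm_num)]; norm_num
  calc 7 * τ * δ = (7 / 100) * (100 * τ) * δ := by ring
    _ ≤ (7 / 100) * ((p - q) * (n / k)) * (1.42 * Real.sqrt (k / n)) := by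
      rw [hδ2]
      gcongr
    _ = (0.0994) * (p - q) * (Real.sqrt (k / n) * (n / k)) := by ring
    _ ≤ _ := by
      rw [hkn]
      gcongr
      norm_num

lemma mean_diff (p q : ℝ) (c : Fin n → Fin k) (u w : Fin n) (huw : c u ≠ c w) :
    ‖(WithLp.toLp 2 (column (meanMatrix n k p q c) u - column (meanMatrix n k p q c) w) :
      EuclideanSpace ℝ (Fin n))‖ ^ 2 =
      (p - q) ^ 2 * (clusterSize c (c u) + clusterSize c (c w)) := by
  rw [nsq_toLp, ← csum_one, ← csum_one, csum, csum, ← Finset.sum_add_distrib, Finset.mul_sum]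
  apply Finset.sum_congr rfl
  intro x _
  simp only [Pi.sub_apply, column, meanMatrix, Matrix.of_apply]
  by_cases h1 : c x = c u
  · have h2 : c x ≠ c w := fun h => huw (h1.symm.trans h)
    simp [h1, huw]
  · by_cases h2 : c x = c w
    · have h3 : c w ≠ c u := fun h => huw h.symm
      simp [h2, h3]; ring
    · simp [h1, h2]

lemma clear_cut_det (hn : 0 < n) (hk : 0 < k) (p q : ℝ) (hq : 0 ≤ q) (hpq : q < p) (c : Fin n → Fin k)
    (hc : ∀ i, (n : ℝ) / (2 * k) ≤ clusterSize c i) (N : Matrix (Fin n) (Fin n) ℝ)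
    (hN : N.IsSymm) (τ : ℝ) (hτ : 0 < τ) (hτ2 : 100 * τ ≤ (p - q) * (n / k))
    (hE : ∀ x : EuclideanSpace ℝ (Fin n), ‖toEuclideanLin N x‖ ≤ τ * ‖x‖)
    (A : ℕ) (hA : (1 / 2 : ℝ) ^ A ≤ Real.sqrt (2 * k / n))
    (hs : ∀ u, ∀ a, 1 ≤ a → a ≤ A → ∑ i, csum c (fun w => (N ^ a) w u) i ^ 2 ≤ τ ^ (2 * a))
    (lam : Fin n → ℝ) (v : Fin n → Fin n → ℝ)
    (hsp : IsSpectralDecomp (meanMatrix n k p q c + N) lam v) (u w : Fin n) :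
    (c u = c w → SBM.enorm ((projTop k v).mulVec (column (meanMatrix n k p q c + N) u) -
        (projTop k v).mulVec (column (meanMatrix n k p q c + N) w)) ≤
          0.8 * (p - q) * Real.sqrt ((n : ℝ) / k) / 4) ∧
    (c u ≠ c w → 0.8 * (p - q) * Real.sqrt ((n : ℝ) / k) ≤
      SBM.enorm ((projTop k v).mulVec (column (meanMatrix n k p q c + N) u) -
        (projTop k v).mulVec (column (meanMatrix n k p q c + N) w))) := by
  have hb := col_bound hn hk p q hq hpq c hc N hN τ hτ hτ2 hE A hA hs lam v hsp
  have hu := hb u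
  have hw := hb w
  rw [enorm_eq]
  set Pu := (projTop k v).mulVec (column (meanMatrix n k p q c + N) u)
  set Pw := (projTop k v).mulVec (column (meanMatrix n k p q c + N) w)
  rw [WithLp.toLp_sub] at hu hw ⊢
  set x : EuclideanSpace ℝ (Fin n) := WithLp.toLp 2 Pu
  set y : EuclideanSpace ℝ (Fin n) := WithLp.toLp 2 Pw
  set gu : EuclideanSpace ℝ (Fin n) := WithLp.toLp 2 (column (meanMatrix n k p q c) u) with hgu
  set gw : EuclideanSpace ℝ (Fin n) := WithLp.toLp 2 (column (meanMatrix n k p q c) w) with hgw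
  have hn' : (0 : ℝ) < n := by exact_mod_cast hn
  have hk' : (0 : ℝ) < k := by exact_mod_cast hk
  have hpq' : 0 < p - q := by linarith
  constructor
  · intro h
    have hg : gu = gw := by
      rw [hgu, hgw]
      congr 1
      funext i
      simp [column, meanMatrix, h]
    have : x - y = (x - gu) - (y - gw) := by rw [hg]; abel
    rw [this]
    calc _ ≤ _ := norm_sub_le _ _
      _ ≤ _ := add_le_add hu hw
      _ = _ := by ring
  · intro h
    have hd := mean_diff p q c u w h
    rw [WithLp.toLp_sub] at hd
    have h1 : (p - q) * Real.sqrt (n / k) ≤ ‖gu - gw‖ := by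
      apply le_of_sq_le_sq _ (norm_nonneg _)
      rw [hd, mul_pow, Real.sq_sqrt (by positivity)]
      gcongr
      have h1 := hc (c u)
      have h2 := hc (c w)
      have h3 : (n : ℝ) / k = n / (2 * k) + n / (2 * k) := by field_simp; norm_num
      linarith
    have h2 : gu - gw = (x - y) - (x - gu) + (y - gw) := by abel
    have h3 : ‖gu - gw‖ ≤ ‖x - y‖ + ‖x - gu‖ + ‖y - gw‖ := by
      rw [h2]
      exact (norm_add_le _ _).trans (by gcongr; exact norm_sub_le _ _)
    have h4 : 0.8 * (p - q) * Real.sqrt (n / k) = (p - q) * Real.sqrt (n / k) -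
      0.1 * (p - q) * Real.sqrt (n / k) - 0.1 * (p - q) * Real.sqrt (n / k) := by ring
    linarith

end Concrete
end SBM


namespace SBM

section Count
variable {n : ℕ}

instance instDecEqEIdx : DecidableEq (EIdx n) :=
  inferInstanceAs (DecidableEq {e : Fin n × Fin n // e.1 ≤ e.2})

instance instFintypeEIdx : Fintype (EIdx n) :=
  inferInstanceAs (Fintype {e : Fin n × Fin n // e.1 ≤ e.2})

/-- Number of distinct vertices, other than `u`, visited by `x`. -/
def nv {ι : Type*} [Fintype ι] (u : Fin n) (x : ι → Fin n) : ℕ :=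
  ((Finset.univ.image x).erase u).card

lemma nv_cons (u : Fin n) {L : ℕ} (y : Fin n) (x : Fin L → Fin n) :
    nv u (Fin.cons y x : Fin (L + 1) → Fin n) =
      if y ∈ insert u (Finset.univ.image x) then nv u x else nv u x + 1 := by
  have h1 : Finset.univ.image (Fin.cons y x : Fin (L + 1) → Fin n) =
      insert y (Finset.univ.image x) := by
    ext w
    simp only [Finset.mem_image, Finset.mem_univ, true_and, Finset.mem_insert, Fin.exists_fin_succ,
      Fin.cons_zero, Fin.cons_succ]
    constructor
    · rintro (h | h)
      · exact Or.inl h.symm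
      · exact Or.inr h
    · rintro (h | h)
      · exact Or.inl h.symm
      · exact Or.inr h
  rw [nv, h1]
  split_ifs with h
  · rw [Finset.mem_insert] at h
    rcases h with h | h
    · rw [h, nv]
      congr 1
      ext w; simp
    · rw [Finset.insert_eq_of_mem h, nv]
  · rw [Finset.mem_insert, not_or] at h
    rw [Finset.erase_insert_of_ne (fun h' => h.1 h'), Finset.card_insert_of_notMem, nv]
    intro h'
    exact h.2 (Finset.mem_of_mem_erase h')

lemma count_fin (hn : 0 < n) (u : Fin n) (L : ℕ) :
    ∑ x : Fin L → Fin n, ((n : ℝ)⁻¹) ^ nv u x ≤ ((L + 1).factorial : ℝ) := by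
  have hn' : (0 : ℝ) < n := by exact_mod_cast hn
  induction L with
  | zero =>
    simp [nv]
  | succ L ih =>
    rw [← (Fin.consEquiv (fun _ : Fin (L + 1) => Fin n)).sum_comp, Fintype.sum_prod_type_right]
    have h1 : ∀ x : Fin L → Fin n, ∑ y : Fin n, ((n : ℝ)⁻¹) ^ nv u (Fin.cons y x : Fin (L + 1) → Fin n)
        ≤ (L + 2) * ((n : ℝ)⁻¹) ^ nv u x := by
      intro x
      have h2 : ∀ y : Fin n, ((n : ℝ)⁻¹) ^ nv u (Fin.cons y x : Fin (L + 1) → Fin n) ≤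
          ((n : ℝ)⁻¹) ^ nv u x * ((if y ∈ insert u (Finset.univ.image x) then 1 else 0) + (n : ℝ)⁻¹) := by
        intro y
        rw [nv_cons]
        split_ifs
        · have : 0 ≤ (n : ℝ)⁻¹ := by positivity
          nlinarith [pow_nonneg this (nv u x)]
        · rw [pow_succ, zero_add]
      calc _ ≤ _ := Finset.sum_le_sum fun y _ => h2 y
        _ = ((n : ℝ)⁻¹) ^ nv u x * ((insert u (Finset.univ.image x)).card + 1) := by
          rw [← Finset.mul_sum, Finset.sum_add_distrib]
          congr 2
          · rw [Finset.sum_boole, Finset.filter_mem_eq_inter, Finset.univ_inter]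
          · simp [hn'.ne']
        _ ≤ ((n : ℝ)⁻¹) ^ nv u x * ((L + 1) + 1) := by
          gcongr
          have h3 : (insert u (Finset.univ.image x)).card ≤ L + 1 :=
            (Finset.card_insert_le _ _).trans (by
              gcongr
              exact Finset.card_image_le.trans (by simp))
          exact_mod_cast h3
        _ = _ := by ring
    calc _ ≤ ∑ x : Fin L → Fin n, (L + 2) * ((n : ℝ)⁻¹) ^ nv u x :=
          Finset.sum_le_sum fun x _ => h1 x
      _ = (L + 2) * ∑ x : Fin L → Fin n, ((n : ℝ)⁻¹) ^ nv u x := by rw [Finset.mul_sum]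
      _ ≤ (L + 2) * ((L + 1).factorial : ℝ) := by gcongr
      _ = _ := by rw [Nat.factorial_succ (L + 1)]; push_cast; ring

lemma count_gen {ι : Type*} [Fintype ι] [DecidableEq ι] (hn : 0 < n) (u : Fin n) :
    ∑ x : ι → Fin n, ((n : ℝ)⁻¹) ^ nv u x ≤ ((Fintype.card ι + 1).factorial : ℝ) := by
  have e := Fintype.equivFin ι
  rw [← (Equiv.arrowCongr e.symm (Equiv.refl (Fin n))).sum_comp]
  refine le_trans (le_of_eq ?_) (count_fin hn u (Fintype.card ι))
  apply Finset.sum_congr rfl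
  intro x _
  have himg : Finset.univ.image ((Equiv.arrowCongr e.symm (Equiv.refl (Fin n))) x) =
      Finset.univ.image x := by
    ext w
    simp only [Finset.mem_image, Finset.mem_univ, true_and, Equiv.arrowCongr_apply, Equiv.coe_refl,
      Function.comp, id, Equiv.symm_symm]
    exact ⟨fun ⟨i, hi⟩ => ⟨e i, hi⟩, fun ⟨i, hi⟩ => ⟨e.symm i, by simpa using hi⟩⟩
  rw [nv, nv, himg]

lemma symPair_comm (a b : Fin n) : symPair a b = symPair b a := by
  apply Subtype.ext
  by_cases h1 : a ≤ b <;> by_cases h2 : b ≤ a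
  · have := le_antisymm h1 h2; simp [this]
  · simp [symPair, h1, h2]
  · simp [symPair, h1, h2]
  · exact absurd (le_of_not_ge h1) h2

lemma symPair_val (a b : Fin n) :
    (symPair a b).1 = (a, b) ∨ (symPair a b).1 = (b, a) := by
  by_cases h1 : a ≤ b
  · left; simp [symPair, h1]
  · right; simp [symPair, h1]

lemma symPair_eq {a b a' b' : Fin n} (h : symPair a b = symPair a' b') :
    (a = a' ∧ b = b') ∨ (a = b' ∧ b = a') := by
  have h' := congrArg Subtype.val h
  rcases symPair_val a b with h1 | h1 <;> rcases symPair_val a' b' with h2 | h2 <;>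
    rw [h1, h2, Prod.mk.injEq] at h' <;> tauto

lemma nv_le_edges {ι : Type*} [Fintype ι] (u : Fin n) (x : ι → Fin n) (par : ι → Option ι)
    (rank : ι → ℕ) (hpar : ∀ i j, par i = some j → rank j < rank i) :
    nv u x ≤ (Finset.univ.image (fun i => symPair ((par i).elim u x) (x i))).card := by
  classical
  have hex : ∀ v ∈ (Finset.univ.image x).erase u, ∃ i, x i = v ∧ ∀ j, x j = v → rank i ≤ rank j := by
    intro v hv
    have h1 := Finset.mem_of_mem_erase hv
    obtain ⟨i0, _, hi0⟩ := Finset.mem_image.1 h1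
    obtain ⟨i, hi, hmin⟩ := Finset.exists_min_image (Finset.univ.filter fun i => x i = v) rank
      ⟨i0, by simp [hi0]⟩
    exact ⟨i, (Finset.mem_filter.1 hi).2, fun j hj => hmin j (by simp [hj])⟩
  rcases isEmpty_or_nonempty ι with hemp | hne
  · simp [nv, Finset.univ_eq_empty]
  choose! f hf1 hf2 using hex
  apply Finset.card_le_card_of_injOn (fun v => symPair ((par (f v)).elim u x) (x (f v)))
  · intro v _
    exact Finset.mem_coe.2 (Finset.mem_image_of_mem _ (Finset.mem_univ _))
  · intro v hv w hw hvw
    have hv := Finset.mem_coe.1 hv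
    have hw := Finset.mem_coe.1 hw
    simp only at hvw
    rw [hf1 v hv, hf1 w hw] at hvw
    rcases symPair_eq hvw with h | h
    · exact h.2
    · exfalso
      obtain ⟨h1, h2⟩ := h
      have key : ∀ a ∈ (Finset.univ.image x).erase u, ∀ b ∈ (Finset.univ.image x).erase u,
          (par (f a)).elim u x = b → rank (f b) < rank (f a) := by
        intro a ha b hb hab
        cases hp : par (f a) with
        | none =>
          rw [hp] at hab
          exact absurd hab.symm (Finset.ne_of_mem_erase hb)
        | some j =>
          rw [hp] at hab
          exact lt_of_le_of_lt (hf2 b hb j hab) (hpar _ _ hp)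
      have := key v hv w hw h1
      have := key w hw v hv h2.symm
      omega

end Count

section Moment
variable {n : ℕ} {Ω : Type*} [MeasurableSpace Ω] {μ : Measure Ω} [IsProbabilityMeasure μ]

lemma moment_prod (hn : 0 < n) (p : ℝ) (hp0 : 0 ≤ p) (hp1 : p ≤ 1) (hnp : 1 ≤ n * p)
    (ξ : EIdx n → Ω → ℝ) (hm : ∀ e, Measurable (ξ e)) (hi : iIndepFun ξ μ)
    (hb : ∀ e ω, |ξ e ω| ≤ 1) (h0 : ∀ e, ∫ ω, ξ e ω ∂μ = 0) (h2 : ∀ e, ∫ ω, ξ e ω ^ 2 ∂μ ≤ p)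
    {ι : Type*} [Fintype ι] (e : ι → EIdx n) (h : ℕ) (hcard : Fintype.card ι = 2 * h)
    (s : ℕ) (hs : s ≤ (Finset.univ.image e).card) :
    |∫ ω, ∏ i, ξ (e i) ω ∂μ| ≤ (n * p) ^ h * ((n : ℝ)⁻¹) ^ s := by
  have hn' : (0 : ℝ) < n := by exact_mod_cast hn
  let mult : EIdx n → ℕ := fun t => (Finset.univ.filter fun i => e i = t).card
  have h1 : ∀ ω, ∏ i, ξ (e i) ω = ∏ t, ξ t ω ^ mult t := by
    intro ω
    rw [← Finset.prod_fiberwise Finset.univ e]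
    apply Finset.prod_congr rfl
    intro t _
    rw [Finset.prod_congr rfl (g := fun _ => ξ t ω), Finset.prod_const]
    intro i hi
    rw [(Finset.mem_filter.1 hi).2]
  simp_rw [h1]
  have hprod : ∫ ω, ∏ t, ξ t ω ^ mult t ∂μ = ∏ t, ∫ ω, ξ t ω ^ mult t ∂μ := by
    have hi' : iIndepFun (fun t ω => ξ t ω ^ mult t) μ :=
      hi.comp (fun t x => x ^ mult t) (fun t => by fun_prop)
    exact hi'.integral_fun_prod_eq_prod_integral
      (fun t => ((hm t).pow_const _).aestronglyMeasurable)
  rw [hprod, Finset.abs_prod]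
  have hintg : ∀ t, Integrable (fun ω => ξ t ω ^ 2) μ := fun t =>
    Integrable.of_bound ((hm t).pow_const _).aestronglyMeasurable 1
      (Filter.Eventually.of_forall fun ω => by
        rw [Real.norm_eq_abs, abs_pow]; exact pow_le_one₀ (abs_nonneg _) (hb t ω))
  by_cases hone : ∃ t, mult t = 1
  · obtain ⟨t, ht⟩ := hone
    rw [Finset.prod_eq_zero (Finset.mem_univ t)]
    · positivity
    · rw [ht]; simp [h0]
  · push Not at hone
    have hle : ∀ t, |∫ ω, ξ t ω ^ mult t ∂μ| ≤ if t ∈ Finset.univ.image e then p else 1 := by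
      intro t
      split_ifs with ht
      · have hpos : 0 < mult t := by
          obtain ⟨i, _, hi⟩ := Finset.mem_image.1 ht
          exact Finset.card_pos.2 ⟨i, by simp [hi]⟩
        have h2' : 2 ≤ mult t := by have := hone t; omega
        calc _ ≤ ∫ ω, |ξ t ω ^ mult t| ∂μ := abs_integral_le_integral_abs
          _ ≤ ∫ ω, ξ t ω ^ 2 ∂μ := by
            apply integral_mono_of_nonneg
            · exact Filter.Eventually.of_forall fun ω => abs_nonneg _
            · exact hintg t
            · refine Filter.Eventually.of_forall fun ω => ?_
              simp only
              rw [abs_pow, ← sq_abs (ξ t ω)]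
              exact pow_le_pow_of_le_one (abs_nonneg _) (hb t ω) h2'
          _ ≤ p := h2 t
      · have : mult t = 0 := by
          rw [Finset.card_eq_zero, Finset.filter_eq_empty_iff]
          intro i _ hi
          exact ht (Finset.mem_image.2 ⟨i, Finset.mem_univ _, hi⟩)
        rw [this]; simp
    have hD : 2 * (Finset.univ.image e).card ≤ 2 * h := by
      rw [← hcard, ← Finset.card_univ (α := ι),
        Finset.card_eq_sum_card_fiberwise (f := e) (t := Finset.univ.image e)
          (fun i _ => Finset.mem_coe.2 (Finset.mem_image_of_mem _ (Finset.mem_univ _))),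
        mul_comm, ← smul_eq_mul, ← Finset.sum_const]
      apply Finset.sum_le_sum
      intro t ht
      have hpos : 0 < mult t := by
        obtain ⟨i, _, hi⟩ := Finset.mem_image.1 ht
        exact Finset.card_pos.2 ⟨i, by simp [hi]⟩
      have := hone t
      show 2 ≤ mult t
      omega
    calc _ ≤ ∏ t, (if t ∈ Finset.univ.image e then p else 1) :=
          Finset.prod_le_prod (fun t _ => abs_nonneg _) (fun t _ => hle t)
      _ = p ^ (Finset.univ.image e).card := by
          rw [Finset.prod_ite_mem, Finset.univ_inter, Finset.prod_const]
      _ ≤ p ^ s := pow_le_pow_of_le_one hp0 hp1 hs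
      _ = (n * p) ^ s * ((n : ℝ)⁻¹) ^ s := by rw [← mul_pow]; congr 1; field_simp
      _ ≤ _ := by
        gcongr
        omega

/-- Entries of the powers as sums over walks. -/
lemma pow_walk (N : Matrix (Fin n) (Fin n) ℝ) (a : ℕ) (u r : Fin n) :
    (N ^ a) u r = ∑ x : Fin a → Fin n,
      if (Fin.cons u x : Fin (a + 1) → Fin n) (Fin.last a) = r then
        ∏ i : Fin a, N ((Fin.cons u x : Fin (a + 1) → Fin n) i.castSucc) (x i) else 0 := by
  induction a generalizing u with
  | zero =>
    simp [Matrix.one_apply]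
  | succ a ih =>
    rw [pow_succ', Matrix.mul_apply, ← (Fin.consEquiv (fun _ : Fin (a + 1) => Fin n)).sum_comp,
      Fintype.sum_prod_type]
    apply Finset.sum_congr rfl
    intro y _
    rw [ih, Finset.mul_sum]
    apply Finset.sum_congr rfl
    intro x _
    have h1 : (Fin.cons u ((Fin.consEquiv (fun _ : Fin (a + 1) => Fin n)) (y, x)) :
        Fin (a + 1 + 1) → Fin n) (Fin.last (a + 1)) =
        (Fin.cons y x : Fin (a + 1) → Fin n) (Fin.last a) := by
      rw [← Fin.succ_last, Fin.cons_succ]; rfl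
    rw [h1, mul_ite, mul_zero, Fin.prod_univ_succ]
    congr 1

end Moment
end SBM


namespace SBM

section Moment2
variable {n : ℕ} {Ω : Type*} [MeasurableSpace Ω] {μ : Measure Ω} [IsProbabilityMeasure μ]

/-- Parent structure of the tuple of walks. -/
def wpar (m a : ℕ) : Fin m × Bool × Fin a → Option (Fin m × Bool × Fin a) :=
  fun t => if t.2.2.1 = 0 then none
    else some (t.1, t.2.1, ⟨t.2.2.1 - 1, lt_of_le_of_lt (Nat.sub_le _ _) t.2.2.2⟩)

lemma cons_castSucc {a : ℕ} (u : Fin n) (x : Fin a → Fin n) (i : Fin a) :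
    (Fin.cons u x : Fin (a + 1) → Fin n) i.castSucc =
      if i.1 = 0 then u else x ⟨i.1 - 1, lt_of_le_of_lt (Nat.sub_le _ _) i.2⟩ := by
  cases a with
  | zero => exact i.elim0
  | succ a =>
    refine Fin.cases ?_ (fun j => ?_) i
    · simp
    · rw [Fin.castSucc_succ, Fin.cons_succ]
      simp
      congr 1

lemma quad_walk (N : Matrix (Fin n) (Fin n) ℝ) (W : Fin n → Fin n → ℝ) (a : ℕ) (u : Fin n) :
    ∑ s, ∑ t, W s t * ((N ^ a) u s * (N ^ a) u t) =
      ∑ x : Bool → Fin a → Fin n,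
        W ((Fin.cons u (x false) : Fin (a + 1) → Fin n) (Fin.last a))
          ((Fin.cons u (x true) : Fin (a + 1) → Fin n) (Fin.last a)) *
        ∏ b : Bool, ∏ i : Fin a, N ((Fin.cons u (x b) : Fin (a + 1) → Fin n) i.castSucc) (x b i) := by
  have gen : ∀ {P : Type} [Fintype P] (f : P → Fin n) (g : P → ℝ),
      ∑ s, ∑ t, W s t * ((∑ x, if f x = s then g x else 0) * (∑ y, if f y = t then g y else 0)) =
      ∑ x, ∑ y, W (f x) (f y) * (g x * g y) := by
    intro P _ f g
    simp only [Finset.sum_mul_sum]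
    simp only [Finset.mul_sum]
    calc _ = ∑ s, ∑ x, ∑ t, ∑ y, W s t * ((if f x = s then g x else 0) * (if f y = t then g y else 0)) := by
          apply Finset.sum_congr rfl; intro s _
          rw [Finset.sum_comm]
      _ = ∑ x, ∑ s, ∑ y, ∑ t, W s t * ((if f x = s then g x else 0) * (if f y = t then g y else 0)) := by
          rw [Finset.sum_comm]
          apply Finset.sum_congr rfl; intro s _
          apply Finset.sum_congr rfl; intro s _
          rw [Finset.sum_comm]
      _ = _ := by
          apply Finset.sum_congr rfl; intro x _
          rw [Finset.sum_comm]
          apply Finset.sum_congr rfl; intro y _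
          rw [Finset.sum_eq_single (f x), Finset.sum_eq_single (f y)]
          · simp
          · intro t _ ht; simp [ht.symm]
          · simp
          · intro s _ hs; simp [hs.symm]
          · simp
  simp only [pow_walk]
  rw [gen, ← (Equiv.boolArrowEquivProd (Fin a → Fin n)).symm.sum_comp, Fintype.sum_prod_type]
  apply Finset.sum_congr rfl; intro x _
  apply Finset.sum_congr rfl; intro y _
  simp [mul_comm]

lemma factorial_bound (L : ℕ) : (L + 1).factorial ≤ (L + 1) ^ L := by
  induction L with
  | zero => simp
  | succ L ih =>
    rw [Nat.factorial_succ, pow_succ, mul_comm]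
    gcongr
    exact ih.trans (Nat.pow_le_pow_left (by omega) _)

lemma quad_moment (hn : 0 < n) (p : ℝ) (hp0 : 0 ≤ p) (hp1 : p ≤ 1) (hnp : 1 ≤ n * p)
    (ξ : EIdx n → Ω → ℝ) (hm : ∀ e, Measurable (ξ e)) (hi : iIndepFun ξ μ)
    (hb : ∀ e ω, |ξ e ω| ≤ 1) (h0 : ∀ e, ∫ ω, ξ e ω ∂μ = 0) (h2 : ∀ e, ∫ ω, ξ e ω ^ 2 ∂μ ≤ p)
    (N : Ω → Matrix (Fin n) (Fin n) ℝ) (hN : ∀ ω a b, N ω a b = ξ (symPair a b) ω)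
    (W : Fin n → Fin n → ℝ) (hW : ∀ s t, |W s t| ≤ 1) (a m : ℕ) (u : Fin n) :
    Integrable (fun ω => (∑ s, ∑ t, W s t * ((N ω ^ a) u s * (N ω ^ a) u t)) ^ m) μ ∧
    ∫ ω, (∑ s, ∑ t, W s t * ((N ω ^ a) u s * (N ω ^ a) u t)) ^ m ∂μ ≤
      (n * p) ^ (a * m) * ((2 * (a * m) + 1).factorial : ℝ) := by
  let ι := Fin m × Bool × Fin a
  let E : (ι → Fin n) → ι → EIdx n := fun X t => symPair ((wpar m a t).elim u X) (X t)
  let cf : (ι → Fin n) → ℝ := fun X => ∏ j : Fin m,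
    W ((Fin.cons u (fun i => X (j, false, i)) : Fin (a + 1) → Fin n) (Fin.last a))
      ((Fin.cons u (fun i => X (j, true, i)) : Fin (a + 1) → Fin n) (Fin.last a))
  have hexp : ∀ ω, (∑ s, ∑ t, W s t * ((N ω ^ a) u s * (N ω ^ a) u t)) ^ m =
      ∑ X : ι → Fin n, cf X * ∏ t, ξ (E X t) ω := by
    intro ω
    rw [quad_walk, Fintype.sum_pow]
    let eqv : (ι → Fin n) ≃ (Fin m → Bool → Fin a → Fin n) :=
      (Equiv.curry (Fin m) (Bool × Fin a) (Fin n)).trans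
        (Equiv.piCongrRight fun _ => Equiv.curry Bool (Fin a) (Fin n))
    rw [← eqv.sum_comp]
    apply Finset.sum_congr rfl
    intro X _
    rw [Finset.prod_mul_distrib]
    congr 1
    rw [Fintype.prod_prod_type]
    apply Finset.prod_congr rfl; intro j _
    rw [Fintype.prod_prod_type]
    apply Finset.prod_congr rfl; intro b _
    apply Finset.prod_congr rfl; intro i _
    rw [hN, cons_castSucc]
    show ξ (symPair _ (X (j, b, i))) ω = ξ (symPair _ (X (j, b, i))) ω
    congr 2
    simp only [wpar]
    split_ifs with h
    · rfl
    · rfl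
  simp_rw [hexp]
  have hintg : ∀ X : ι → Fin n, Integrable (fun ω => cf X * ∏ t, ξ (E X t) ω) μ := by
    intro X
    apply Integrable.const_mul
    refine Integrable.of_bound (Finset.measurable_prod _ fun t _ => hm _).aestronglyMeasurable 1 ?_
    refine Filter.Eventually.of_forall fun ω => ?_
    rw [Real.norm_eq_abs, Finset.abs_prod]
    exact Finset.prod_le_one (fun t _ => abs_nonneg _) (fun t _ => hb _ _)
  have hcf : ∀ X, |cf X| ≤ 1 := by
    intro X
    rw [Finset.abs_prod]
    exact Finset.prod_le_one (fun t _ => abs_nonneg _) (fun t _ => hW _ _)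
  have hcard : Fintype.card ι = 2 * (a * m) := by
    simp [ι]; ring
  refine ⟨integrable_finset_sum _ fun X _ => hintg X, ?_⟩
  rw [integral_finset_sum _ fun X _ => hintg X]
  have hX : ∀ X : ι → Fin n, ∫ ω, cf X * ∏ t, ξ (E X t) ω ∂μ ≤ (n * p) ^ (a * m) * ((n : ℝ)⁻¹) ^ nv u X := by
    intro X
    rw [integral_const_mul]
    calc _ ≤ _ := le_abs_self _
      _ = |cf X| * |∫ ω, ∏ t, ξ (E X t) ω ∂μ| := abs_mul _ _
      _ ≤ 1 * |∫ ω, ∏ t, ξ (E X t) ω ∂μ| := by gcongr; exact hcf X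
      _ = |∫ ω, ∏ t, ξ (E X t) ω ∂μ| := one_mul _
      _ ≤ _ := by
        apply moment_prod hn p hp0 hp1 hnp ξ hm hi hb h0 h2 (E X) _ hcard
        apply nv_le_edges u X (wpar m a) (fun t => t.2.2.1)
        intro i j hij
        simp only [wpar] at hij
        split_ifs at hij with h
        have := Option.some.inj hij
        rw [← this]
        simp only
        omega
  calc _ ≤ ∑ X : ι → Fin n, (n * p) ^ (a * m) * ((n : ℝ)⁻¹) ^ nv u X :=
        Finset.sum_le_sum fun X _ => hX X
    _ = (n * p) ^ (a * m) * ∑ X : ι → Fin n, ((n : ℝ)⁻¹) ^ nv u X := by rw [Finset.mul_sum]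
    _ ≤ _ := by
      gcongr
      rw [← hcard]
      exact count_gen hn u

lemma quad_tail (hn : 0 < n) (p : ℝ) (hp0 : 0 ≤ p) (hp1 : p ≤ 1) (hnp : 1 ≤ n * p)
    (ξ : EIdx n → Ω → ℝ) (hm : ∀ e, Measurable (ξ e)) (hi : iIndepFun ξ μ)
    (hb : ∀ e ω, |ξ e ω| ≤ 1) (h0 : ∀ e, ∫ ω, ξ e ω ∂μ = 0) (h2 : ∀ e, ∫ ω, ξ e ω ^ 2 ∂μ ≤ p)
    (N : Ω → Matrix (Fin n) (Fin n) ℝ) (hN : ∀ ω a b, N ω a b = ξ (symPair a b) ω)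
    (W : Fin n → Fin n → ℝ) (hW : ∀ s t, |W s t| ≤ 1) (a m : ℕ) (hm0 : m ≠ 0) (u : Fin n) (B : ℕ)
    (hB : 2 * (a * m) + 1 ≤ B)
    (hQ : ∀ ω, 0 ≤ ∑ s, ∑ t, W s t * ((N ω ^ a) u s * (N ω ^ a) u t)) :
    μ.real {ω | (8 * B * Real.sqrt (n * p)) ^ (2 * a) ≤
      ∑ s, ∑ t, W s t * ((N ω ^ a) u s * (N ω ^ a) u t)} ≤ (1 / 64 : ℝ) ^ (a * m) := by
  obtain ⟨hintg, hmom⟩ := quad_moment hn p hp0 hp1 hnp ξ hm hi hb h0 h2 N hN W hW a m u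
  set τ := 8 * B * Real.sqrt (n * p) with hτ
  have hB0 : 0 < B := by omega
  have hnp0 : (0 : ℝ) < n * p := by linarith
  have hτ0 : 0 < τ := by positivity
  have hmk := mul_meas_ge_le_integral_of_nonneg (μ := μ)
    (Filter.Eventually.of_forall fun ω => pow_nonneg (hQ ω) m) hintg ((τ ^ (2 * a)) ^ m)
  have hset : {ω | τ ^ (2 * a) ≤ ∑ s, ∑ t, W s t * ((N ω ^ a) u s * (N ω ^ a) u t)} =
      {ω | (τ ^ (2 * a)) ^ m ≤ (∑ s, ∑ t, W s t * ((N ω ^ a) u s * (N ω ^ a) u t)) ^ m} := by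
    ext ω
    simp only [Set.mem_setOf_eq]
    exact (pow_le_pow_iff_left₀ (by positivity) (hQ ω) hm0).symm
  rw [hset]
  have hfac : ((2 * (a * m) + 1).factorial : ℝ) ≤ (B : ℝ) ^ (2 * (a * m)) := by
    have h1 := factorial_bound (2 * (a * m))
    have h3 := h1.trans (Nat.pow_le_pow_left hB _)
    exact_mod_cast h3
  have hτpow : (τ ^ (2 * a)) ^ m = 64 ^ (a * m) * ((B : ℝ) ^ (2 * (a * m)) * (n * p) ^ (a * m)) := by
    have : τ ^ 2 = 64 * ((B : ℝ) ^ 2 * (n * p)) := by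
      rw [hτ, mul_pow, mul_pow, Real.sq_sqrt hnp0.le]; ring
    rw [← pow_mul, mul_assoc, pow_mul, this, mul_pow, mul_pow, ← pow_mul (B : ℝ) 2 (a * m)]
  have hτp : 0 < (τ ^ (2 * a)) ^ m := by positivity
  have hK : 0 < ((B : ℝ) ^ (2 * (a * m)) * (n * p) ^ (a * m)) := by positivity
  have h5 := hmk.trans hmom
  have h6 : (n * p) ^ (a * m) * ((2 * (a * m) + 1).factorial : ℝ) ≤
      (τ ^ (2 * a)) ^ m * (1 / 64 : ℝ) ^ (a * m) := by
    rw [hτpow]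
    calc _ ≤ (n * p) ^ (a * m) * (B : ℝ) ^ (2 * (a * m)) := by gcongr
      _ = _ := by
        rw [one_div, inv_pow]
        field_simp
  exact le_of_mul_le_mul_left (h5.trans h6) hτp

end Moment2
end SBM


namespace SBM

section Noise
variable {n k : ℕ}

/-- The quadratic form of the row `u` of `N ^ a`. -/
def qf (W : Fin n → Fin n → ℝ) (N : Matrix (Fin n) (Fin n) ℝ) (a : ℕ) (u : Fin n) : ℝ :=
  ∑ s, ∑ t, W s t * ((N ^ a) u s * (N ^ a) u t)

/-- Identity weight. -/
def wId (s t : Fin n) : ℝ := if s = t then 1 else 0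

/-- Same cluster weight. -/
def wCl (c : Fin n → Fin k) (s t : Fin n) : ℝ := if c s = c t then 1 else 0

lemma qf_wId (N : Matrix (Fin n) (Fin n) ℝ) (a : ℕ) (u : Fin n) :
    qf wId N a u = ∑ s, (N ^ a) u s ^ 2 := by
  simp [qf, wId, sq]

lemma qf_wCl (c : Fin n → Fin k) (N : Matrix (Fin n) (Fin n) ℝ) (hN : N.IsSymm) (a : ℕ) (u : Fin n) :
    qf (wCl c) N a u = ∑ i, csum c (fun w => (N ^ a) w u) i ^ 2 := by
  have hs : ∀ w, (N ^ a) w u = (N ^ a) u w := fun w => (hN.pow a).apply u w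
  simp only [hs, sq]
  rw [← sum_cl c (fun i => csum c (fun w => (N ^ a) u w) i) (fun w => (N ^ a) u w)]
  unfold qf csum wCl
  apply Finset.sum_congr rfl; intro s _
  rw [Finset.sum_mul]
  apply Finset.sum_congr rfl; intro t _
  by_cases h : c s = c t
  · simp [h, mul_comm]
  · simp [h, Ne.symm h]

/-- Bad noise matrices. -/
def badN (c : Fin n → Fin k) (T1 T : ℝ) (A : ℕ) : Set (Matrix (Fin n) (Fin n) ℝ) :=
  {N | (∃ u, T1 ^ (2 * A) ≤ qf wId N A u) ∨
    ∃ u, ∃ a, (1 ≤ a ∧ a ≤ A) ∧ T ^ (2 * a) ≤ qf (wCl c) N a u}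

lemma opnorm_of_frob (N : Matrix (Fin n) (Fin n) ℝ) (hN : N.IsSymm) (j : ℕ) (τ : ℝ) (hτ : 0 ≤ τ)
    (h : ∑ u, ∑ s, (N ^ (2 ^ j)) u s ^ 2 ≤ τ ^ (2 * 2 ^ j)) (x : EuclideanSpace ℝ (Fin n)) :
    ‖toEuclideanLin N x‖ ≤ τ * ‖x‖ := by
  set M := Matrix.toEuclideanCLM (n := Fin n) (𝕜 := ℝ) N with hM
  have hsa : IsSelfAdjoint M := by
    have : IsSelfAdjoint N := by
      rw [IsSelfAdjoint, Matrix.star_eq_conjTranspose, Matrix.conjTranspose_eq_transpose_of_trivial]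
      exact hN
    exact this.map _
  have h1 := IsSelfAdjoint.norm_pow_two_pow (E := EuclideanSpace ℝ (Fin n) →L[ℝ] EuclideanSpace ℝ (Fin n)) hsa j
  have h2 : ‖M ^ (2 ^ j)‖ ≤ τ ^ (2 ^ j) := by
    apply ContinuousLinearMap.opNorm_le_bound _ (by positivity)
    intro y
    rw [hM, ← map_pow]
    obtain ⟨y, rfl⟩ : ∃ z : Fin n → ℝ, y = WithLp.toLp 2 z := ⟨WithLp.ofLp y, rfl⟩
    rw [Matrix.toEuclideanCLM_toLp]
    apply le_of_sq_le_sq _ (by positivity)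
    rw [mul_pow, nsq_toLp, nsq_toLp]
    calc ∑ i, (N ^ 2 ^ j *ᵥ y) i ^ 2 ≤ ∑ i, (∑ s, (N ^ 2 ^ j) i s ^ 2) * ∑ s, y s ^ 2 := by
          gcongr with i
          exact Finset.sum_mul_sq_le_sq_mul_sq (R := ℝ) Finset.univ (fun s => (N ^ 2 ^ j) i s) y
      _ = (∑ i, ∑ s, (N ^ 2 ^ j) i s ^ 2) * ∑ s, y s ^ 2 := by rw [Finset.sum_mul]
      _ ≤ (τ ^ 2 ^ j) ^ 2 * ∑ s, y s ^ 2 := by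
          gcongr
          rw [← pow_mul, mul_comm (2 ^ j)]; exact h
  rw [h1] at h2
  have h3 : ‖M‖ ≤ τ := le_of_pow_le_pow_left₀ (by positivity) hτ h2
  calc ‖toEuclideanLin N x‖ = ‖M x‖ := rfl
    _ ≤ ‖M‖ * ‖x‖ := M.le_opNorm x
    _ ≤ _ := by gcongr

lemma good_of_not_bad (c : Fin n → Fin k) (N : Matrix (Fin n) (Fin n) ℝ) (hN : N.IsSymm) (j : ℕ)
    (T1 τ : ℝ) (hT1 : 0 ≤ T1) (hτ : 2 * T1 ≤ τ) (hn : n ≤ 4 ^ (2 ^ j))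
    (h : N ∉ badN c T1 τ (2 ^ j)) :
    (∀ x : EuclideanSpace ℝ (Fin n), ‖toEuclideanLin N x‖ ≤ τ * ‖x‖) ∧
    ∀ u, ∀ a, 1 ≤ a → a ≤ 2 ^ j → ∑ i, csum c (fun w => (N ^ a) w u) i ^ 2 ≤ τ ^ (2 * a) := by
  simp only [badN, Set.mem_setOf_eq, not_or, not_exists, not_and, not_le] at h
  refine ⟨opnorm_of_frob N hN j τ (by linarith) ?_, ?_⟩
  · calc ∑ u, ∑ s, (N ^ (2 ^ j)) u s ^ 2 ≤ ∑ u : Fin n, T1 ^ (2 * 2 ^ j) := by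
          gcongr with u
          rw [← qf_wId]; exact (h.1 u).le
      _ = n * T1 ^ (2 * 2 ^ j) := by simp
      _ ≤ (4 ^ (2 ^ j) : ℕ) * T1 ^ (2 * 2 ^ j) := by gcongr
      _ = (2 * T1) ^ (2 * 2 ^ j) := by
          rw [mul_pow, pow_mul 2]; norm_num
      _ ≤ _ := by gcongr
  · intro u a h1 h2
    rw [← qf_wCl c N hN]
    exact (h.2 u a ⟨h1, h2⟩).le

lemma meanMatrix_symPair (p q : ℝ) (c : Fin n → Fin k) (a b : Fin n) :
    meanMatrix n k p q c a b = meanMatrix n k p q c (symPair a b).1.1 (symPair a b).1.2 := by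
  rcases symPair_val a b with h | h <;> rw [h]
  simp only [meanMatrix, Matrix.of_apply]
  exact if_congr eq_comm rfl rfl

/-- Edge noise. -/
noncomputable def eNoise (p q : ℝ) (c : Fin n → Fin k) (e : EIdx n) (x : ℝ) : ℝ :=
  if x < meanMatrix n k p q c e.1.1 e.1.2 then 1 - meanMatrix n k p q c e.1.1 e.1.2
    else -(meanMatrix n k p q c e.1.1 e.1.2)

lemma noiseOf_eq (p q : ℝ) (c : Fin n → Fin k) (U : EIdx n → ℝ) (a b : Fin n) :
    noiseOf p q c U a b = eNoise p q c (symPair a b) (U (symPair a b)) := by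
  simp only [noiseOf, eNoise, Matrix.of_apply]
  rw [← meanMatrix_symPair]

lemma noiseOf_symm (p q : ℝ) (c : Fin n → Fin k) (U : EIdx n → ℝ) : (noiseOf p q c U).IsSymm := by
  ext a b
  rw [Matrix.transpose_apply, noiseOf_eq, noiseOf_eq, symPair_comm]

lemma eNoise_meas (p q : ℝ) (c : Fin n → Fin k) (e : EIdx n) : Measurable (eNoise p q c e) := by
  unfold eNoise
  exact Measurable.ite measurableSet_Iio measurable_const measurable_const

lemma mean_mem (p q : ℝ) (hq : 0 ≤ q) (hpq : q < p) (c : Fin n → Fin k) (a b : Fin n) :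
    0 ≤ meanMatrix n k p q c a b ∧ meanMatrix n k p q c a b ≤ p := by
  simp only [meanMatrix, Matrix.of_apply]
  split_ifs <;> constructor <;> linarith

lemma eNoise_abs (p q : ℝ) (hq : 0 ≤ q) (hpq : q < p) (hp : p ≤ 1) (c : Fin n → Fin k) (e : EIdx n)
    (x : ℝ) : |eNoise p q c e x| ≤ 1 := by
  obtain ⟨h1, h2⟩ := mean_mem p q hq hpq c e.1.1 e.1.2
  unfold eNoise
  split_ifs <;> rw [abs_le] <;> constructor <;> linarith

lemma int_step (g α β : ℝ) (h0 : 0 ≤ g) (h1 : g ≤ 1) :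
    ∫ x in Set.Ico (0 : ℝ) 1, (if x < g then α else β) = g * α + (1 - g) * β := by
  have hu : Set.Ico (0 : ℝ) 1 = Set.Ico 0 g ∪ Set.Ico g 1 := (Set.Ico_union_Ico_eq_Ico h0 h1).symm
  have e1 : Set.EqOn (fun x : ℝ => if x < g then α else β) (fun _ => α) (Set.Ico 0 g) := by
    intro x hx; simp [hx.2]
  have e2 : Set.EqOn (fun x : ℝ => if x < g then α else β) (fun _ => β) (Set.Ico g 1) := by
    intro x hx; simp [not_lt.2 hx.1]
  rw [hu, setIntegral_union (by
      rw [Set.disjoint_left]; intro x hx hy; exact absurd hx.2 (not_lt.2 hy.1)) measurableSet_Ico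
      ((integrableOn_congr_fun e1 measurableSet_Ico).2 (by simp))
      ((integrableOn_congr_fun e2 measurableSet_Ico).2 (by simp)),
    setIntegral_congr_fun measurableSet_Ico e1, setIntegral_congr_fun measurableSet_Ico e2]
  simp [h0, h1]

variable {Ω : Type*} [MeasurableSpace Ω] {μ : Measure Ω} [IsProbabilityMeasure μ]

lemma noise_tail (hn : 0 < n) (p q : ℝ) (hq : 0 ≤ q) (hpq : q < p) (hp : p ≤ 1) (hnp : 1 ≤ n * p)
    (U : Ω → EIdx n → ℝ) (hmU : ∀ e, Measurable fun ω => U ω e)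
    (hi : iIndepFun (fun e ω => U ω e) μ)
    (hu : ∀ e, Measure.map (fun ω => U ω e) μ = volume.restrict (Set.Ico (0 : ℝ) 1))
    (c : Fin n → Fin k) (A : ℕ) (hA : A ≠ 0) :
    μ.real {ω | noiseOf p q c (U ω) ∈ badN c (8 * ((2 * A + 1 : ℕ) : ℝ) * Real.sqrt (n * p))
      (8 * ((2 * (A * A) + 1 : ℕ) : ℝ) * Real.sqrt (n * p)) A} ≤ n * (A + 1) * (1 / 64 : ℝ) ^ A := by
  set ξ : EIdx n → Ω → ℝ := fun e ω => eNoise p q c e (U ω e) with hξ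
  have hm : ∀ e, Measurable (ξ e) := fun e => (eNoise_meas p q c e).comp (hmU e)
  have hiξ : iIndepFun ξ μ := hi.comp (fun e => eNoise p q c e) (fun e => eNoise_meas p q c e)
  have hb : ∀ e ω, |ξ e ω| ≤ 1 := fun e ω => eNoise_abs p q hq hpq hp c e _
  have hN : ∀ ω a b, noiseOf p q c (U ω) a b = ξ (symPair a b) ω := fun ω a b => noiseOf_eq p q c _ a b
  have hintg : ∀ (e : EIdx n) (f : ℝ → ℝ), Measurable f →
      ∫ ω, f (U ω e) ∂μ = ∫ x in Set.Ico (0 : ℝ) 1, f x := by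
    intro e f hf
    rw [← hu e, integral_map (hmU e).aemeasurable hf.aestronglyMeasurable]
  have h0 : ∀ e, ∫ ω, ξ e ω ∂μ = 0 := by
    intro e
    obtain ⟨h1, h2⟩ := mean_mem p q hq hpq c e.1.1 e.1.2
    rw [hξ]
    simp only
    rw [hintg e _ (eNoise_meas p q c e)]
    unfold eNoise
    rw [int_step _ _ _ h1 (by linarith)]
    ring
  have h2 : ∀ e, ∫ ω, ξ e ω ^ 2 ∂μ ≤ p := by
    intro e
    obtain ⟨h1, h2⟩ := mean_mem p q hq hpq c e.1.1 e.1.2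
    rw [hξ]
    simp only
    rw [hintg e _ ((eNoise_meas p q c e).pow_const 2)]
    unfold eNoise
    simp only [ite_pow]
    rw [int_step _ _ _ h1 (by linarith)]
    nlinarith
  have hp0 : 0 ≤ p := by linarith
  have t1 : ∀ u, μ.real {ω | (8 * ((2 * A + 1 : ℕ) : ℝ) * Real.sqrt (n * p)) ^ (2 * A) ≤
      qf wId (noiseOf p q c (U ω)) A u} ≤ (1 / 64 : ℝ) ^ A := by
    intro u
    have := quad_tail hn p hp0 hp hnp ξ hm hiξ hb h0 h2 (fun ω => noiseOf p q c (U ω)) hN wId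
      (by intro s t; unfold wId; split_ifs <;> simp) A 1 one_ne_zero u (2 * A + 1) (by simp)
      (by intro ω; have := qf_wId (noiseOf p q c (U ω)) A u; unfold qf at this; rw [this]; positivity)
    simpa [qf] using this
  have t2 : ∀ u a, 1 ≤ a → a ≤ A → μ.real {ω | (8 * ((2 * (A * A) + 1 : ℕ) : ℝ) * Real.sqrt (n * p)) ^ (2 * a) ≤
      qf (wCl c) (noiseOf p q c (U ω)) a u} ≤ (1 / 64 : ℝ) ^ A := by
    intro u a ha1 ha2
    have := quad_tail hn p hp0 hp hnp ξ hm hiξ hb h0 h2 (fun ω => noiseOf p q c (U ω)) hN (wCl c)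
      (by intro s t; unfold wCl; split_ifs <;> simp) a A hA u (2 * (A * A) + 1) (by gcongr)
      (by
        intro ω
        have := qf_wCl c (noiseOf p q c (U ω)) (noiseOf_symm _ _ _ _) a u
        unfold qf at this; rw [this]; positivity)
    refine this.trans ?_
    apply pow_le_pow_of_le_one (by norm_num) (by norm_num)
    nlinarith
  have hsub : {ω | noiseOf p q c (U ω) ∈ badN c (8 * ((2 * A + 1 : ℕ) : ℝ) * Real.sqrt (n * p))
      (8 * ((2 * (A * A) + 1 : ℕ) : ℝ) * Real.sqrt (n * p)) A} ⊆
      (⋃ u ∈ (Finset.univ : Finset (Fin n)), {ω | (8 * ((2 * A + 1 : ℕ) : ℝ) * Real.sqrt (n * p)) ^ (2 * A) ≤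
        qf wId (noiseOf p q c (U ω)) A u}) ∪
      ⋃ ua ∈ (Finset.univ : Finset (Fin n)) ×ˢ Finset.Icc 1 A,
        {ω | (8 * ((2 * (A * A) + 1 : ℕ) : ℝ) * Real.sqrt (n * p)) ^ (2 * ua.2) ≤
        qf (wCl c) (noiseOf p q c (U ω)) ua.2 ua.1} := by
    rintro ω (⟨u, h⟩ | ⟨u, a, ha, h⟩)
    · left
      simp only [Set.mem_iUnion]
      exact ⟨u, Finset.mem_univ _, h⟩
    · right
      simp only [Set.mem_iUnion]
      exact ⟨(u, a), by simp [ha], h⟩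
  calc _ ≤ _ := measureReal_mono hsub
    _ ≤ _ := measureReal_union_le _ _
    _ ≤ (∑ u : Fin n, (1 / 64 : ℝ) ^ A) + ∑ ua ∈ (Finset.univ : Finset (Fin n)) ×ˢ Finset.Icc 1 A, (1 / 64 : ℝ) ^ A := by
        gcongr
        · refine (measureReal_biUnion_finset_le _ _).trans ?_
          gcongr with u
          exact t1 u
        · refine (measureReal_biUnion_finset_le _ _).trans ?_
          gcongr with ua hua
          simp at hua
          exact t2 _ _ hua.1 hua.2
    _ = _ := by simp; ring

lemma qf_meas (p q : ℝ) (c : Fin n → Fin k) (W : Fin n → Fin n → ℝ) (a : ℕ) (u : Fin n) :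
    Measurable fun x : EIdx n → ℝ => qf W (noiseOf p q c x) a u := by
  have h : ∀ a (u s : Fin n), Measurable fun x : EIdx n → ℝ => (noiseOf p q c x ^ a) u s := by
    intro a
    induction a with
    | zero => intro u s; simp
    | succ a ih =>
      intro u s
      simp only [pow_succ, Matrix.mul_apply]
      apply Finset.measurable_sum; intro t _
      apply (ih u t).mul
      simp only [noiseOf_eq]
      exact (eNoise_meas p q c _).comp (measurable_pi_apply _)
  unfold qf
  apply Finset.measurable_sum; intro s _
  apply Finset.measurable_sum; intro t _
  exact ((h a u s).mul (h a u t)).const_mul _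

lemma badN_meas (p q : ℝ) (c : Fin n → Fin k) (T1 T : ℝ) (A : ℕ) :
    MeasurableSet {x : EIdx n → ℝ | noiseOf p q c x ∈ badN c T1 T A} := by
  have : {x : EIdx n → ℝ | noiseOf p q c x ∈ badN c T1 T A} =
    (⋃ u, {x | T1 ^ (2 * A) ≤ qf wId (noiseOf p q c x) A u}) ∪
      ⋃ u, ⋃ a, ⋃ (_ : 1 ≤ a ∧ a ≤ A), {x | T ^ (2 * a) ≤ qf (wCl c) (noiseOf p q c x) a u} := by
    ext x; simp only [badN, Set.mem_setOf_eq, Set.mem_union, Set.mem_iUnion, exists_prop]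
  rw [this]
  refine MeasurableSet.union (MeasurableSet.iUnion fun u => ?_)
    (MeasurableSet.iUnion fun u => MeasurableSet.iUnion fun a => MeasurableSet.iUnion fun _ => ?_)
  · exact measurableSet_le measurable_const (qf_meas _ _ _ _ _ _)
  · exact measurableSet_le measurable_const (qf_meas _ _ _ _ _ _)

end Noise
end SBM


namespace SBM

section Prob
variable {n k : ℕ} {Ω : Type*} [MeasurableSpace Ω] {μ : Measure Ω} [IsProbabilityMeasure μ]

lemma indep_U (cl : Ω → Fin n → Fin k) (U : Ω → EIdx n → ℝ)
    (hindep : iIndepFun (m := mixMS n k) (mixFam cl U) μ) : iIndepFun (fun e ω => U ω e) μ :=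
  iIndepFun.precomp (m := mixMS n k) (f := mixFam cl U) (g := Sum.inr) Sum.inr_injective hindep

lemma indep_cl (cl : Ω → Fin n → Fin k) (U : Ω → EIdx n → ℝ)
    (hindep : iIndepFun (m := mixMS n k) (mixFam cl U) μ) : iIndepFun (fun v ω => cl ω v) μ :=
  iIndepFun.precomp (m := mixMS n k) (f := mixFam cl U) (g := Sum.inl) Sum.inl_injective hindep

lemma indep_cl_U (cl : Ω → Fin n → Fin k) (U : Ω → EIdx n → ℝ)
    (hmeasc : ∀ v : Fin n, Measurable fun ω => cl ω v)
    (hmeasU : ∀ e : EIdx n, Measurable fun ω => U ω e)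
    (hindep : iIndepFun (m := mixMS n k) (mixFam cl U) μ) :
    IndepFun (fun ω => cl ω) (fun ω => U ω) μ := by
  let _ := mixMS n k
  have hm : ∀ i, Measurable (mixFam cl U i) := by
    rintro (v | e)
    · exact hmeasc v
    · exact hmeasU e
  have h := iIndepFun.indepFun_finset (f := mixFam cl U) (Finset.univ.map Function.Embedding.inl)
    (Finset.univ.map Function.Embedding.inr)
    (by
      rw [Finset.disjoint_left]; intro x hx hy
      simp only [Finset.mem_map, Finset.mem_univ, true_and] at hx hy
      obtain ⟨a, rfl⟩ := hx
      obtain ⟨b, hb⟩ := hy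
      exact absurd hb (by simp)) hindep hm
  let φ : ((i : (Finset.univ.map Function.Embedding.inl : Finset (Fin n ⊕ EIdx n))) → mixType n k i) →
      Fin n → Fin k := fun x v => x ⟨Sum.inl v, by simp⟩
  let ψ : ((i : (Finset.univ.map Function.Embedding.inr : Finset (Fin n ⊕ EIdx n))) → mixType n k i) →
      EIdx n → ℝ := fun x v => x ⟨Sum.inr v, by simp⟩
  have h' := h.comp (φ := φ) (ψ := ψ)
    (by
      apply measurable_pi_lambda; intro v
      exact measurable_pi_apply (⟨Sum.inl v, by simp⟩ : (Finset.univ.map Function.Embedding.inl : Finset (Fin n ⊕ EIdx n))))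
    (by
      apply measurable_pi_lambda; intro v
      exact measurable_pi_apply (⟨Sum.inr v, by simp⟩ : (Finset.univ.map Function.Embedding.inr : Finset (Fin n ⊕ EIdx n))))
  exact h'

lemma bad_total (p q : ℝ) (cl : Ω → Fin n → Fin k) (U : Ω → EIdx n → ℝ)
    (hmeasc : ∀ v : Fin n, Measurable fun ω => cl ω v)
    (hind : IndepFun (fun ω => cl ω) (fun ω => U ω) μ) (T1 T : ℝ) (A : ℕ) (δ : ℝ)
    (hδ : ∀ c : Fin n → Fin k, μ.real {ω | noiseOf p q c (U ω) ∈ badN c T1 T A} ≤ δ) :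
    μ.real {ω | noiseOf p q (cl ω) (U ω) ∈ badN (cl ω) T1 T A} ≤ δ := by
  have hmc : Measurable cl := measurable_pi_lambda _ hmeasc
  have hsub : {ω | noiseOf p q (cl ω) (U ω) ∈ badN (cl ω) T1 T A} ⊆
      ⋃ c ∈ (Finset.univ : Finset (Fin n → Fin k)),
        (cl ⁻¹' {c} ∩ U ⁻¹' {x | noiseOf p q c x ∈ badN c T1 T A}) := by
    intro ω h
    simp only [Set.mem_iUnion]
    exact ⟨cl ω, Finset.mem_univ _, rfl, h⟩
  calc _ ≤ _ := measureReal_mono hsub (measure_ne_top _ _)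
    _ ≤ _ := measureReal_biUnion_finset_le _ _
    _ ≤ ∑ c : Fin n → Fin k, μ.real (cl ⁻¹' {c}) * δ := by
        gcongr with c
        rw [measureReal_def, hind.measure_inter_preimage_eq_mul _ _ (MeasurableSet.singleton c) (badN_meas p q c T1 T A),
          ENNReal.toReal_mul]
        exact mul_le_mul_of_nonneg_left (hδ c) (by positivity)
    _ = (∑ c : Fin n → Fin k, μ.real (cl ⁻¹' {c})) * δ := by rw [Finset.sum_mul]
    _ = δ := by
        rw [sum_measureReal_preimage_singleton _ (fun c _ => hmc (MeasurableSet.singleton c))]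
        simp

lemma cl_tail (hk : 0 < k) (cl : Ω → Fin n → Fin k)
    (hmeasc : ∀ v : Fin n, Measurable fun ω => cl ω v)
    (hi : iIndepFun (fun v ω => cl ω v) μ)
    (hu : ∀ (v : Fin n) (j : Fin k), μ {ω : Ω | cl ω v = j} = (k : ENNReal)⁻¹) (i : Fin k) :
    μ.real {ω | ¬ (n : ℝ) / (2 * k) ≤ clusterSize (cl ω) i} ≤ Real.exp (-(0.15 * (n / k))) := by
  set f : Fin k → ℝ := fun j => if j = i then 1 / 2 else 1 with hf
  have hk' : (0 : ℝ) < k := by exact_mod_cast hk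
  have hfm : Measurable f := measurable_of_finite f
  have hY : iIndepFun (fun v ω => f (cl ω v)) μ := hi.comp (fun _ => f) (fun _ => hfm)
  have hYm : ∀ v, Measurable fun ω => f (cl ω v) := fun v => hfm.comp (hmeasc v)
  have hE : ∀ v, ∫ ω, f (cl ω v) ∂μ = 1 - 1 / (2 * k) := by
    intro v
    have h1 : ∀ ω, f (cl ω v) = 1 - Set.indicator {ω | cl ω v = i} (fun _ => (1 / 2 : ℝ)) ω := by
      intro ω
      by_cases h : cl ω v = i
      · simp [hf, h]; norm_num
      · simp [hf, h]
    have hms : MeasurableSet {ω | cl ω v = i} := (hmeasc v) (MeasurableSet.singleton i)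
    simp only [h1]
    rw [integral_sub (integrable_const _) ((integrable_const _).indicator hms), integral_indicator_const _ hms,
      measureReal_def, hu]
    simp
  have hprod : ∫ ω, ∏ v, f (cl ω v) ∂μ = (1 - 1 / (2 * k)) ^ n := by
    rw [hY.integral_fun_prod_eq_prod_integral (fun v => (hYm v).aestronglyMeasurable)]
    simp [hE]
  have hpow : ∀ ω, ∏ v, f (cl ω v) = (1 / 2 : ℝ) ^ clusterSize (cl ω) i := by
    intro ω
    simp only [hf, clusterSize]
    rw [Finset.prod_ite]
    simp
  have hintg : Integrable (fun ω => ∏ v, f (cl ω v)) μ := by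
    apply Integrable.of_bound (C := 1) (Finset.measurable_prod _ fun v _ => hYm v).aestronglyMeasurable
    refine Filter.Eventually.of_forall fun ω => ?_
    rw [hpow, Real.norm_of_nonneg (by positivity)]
    exact pow_le_one₀ (by norm_num) (by norm_num)
  have hmk := mul_meas_ge_le_integral_of_nonneg (μ := μ) (f := fun ω => ∏ v, f (cl ω v))
    (Filter.Eventually.of_forall fun ω => by simp only [hpow]; positivity) hintg
    (Real.exp (-(0.7 * (n / (2 * k)))))
  rw [hprod] at hmk
  have hsub : {ω | ¬ (n : ℝ) / (2 * k) ≤ clusterSize (cl ω) i} ⊆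
      {ω | Real.exp (-(0.7 * (n / (2 * k)))) ≤ ∏ v, f (cl ω v)} := by
    intro ω h
    simp only [Set.mem_setOf_eq, not_le] at h ⊢
    rw [hpow]
    have : (1 / 2 : ℝ) ^ clusterSize (cl ω) i = Real.exp (-(Real.log 2 * clusterSize (cl ω) i)) := by
      rw [Real.exp_neg, Real.exp_mul, Real.exp_log (by norm_num), Real.rpow_natCast]
      simp
    rw [this]
    apply Real.exp_le_exp.2
    have := Real.log_two_lt_d9
    have h0 : (0 : ℝ) ≤ clusterSize (cl ω) i := by positivity
    nlinarith
  have hub : (1 - 1 / (2 * k : ℝ)) ^ n ≤ Real.exp (-(n / (2 * k))) := by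
    have h1 : 1 - 1 / (2 * k : ℝ) ≤ Real.exp (-(1 / (2 * k))) := by
      have := Real.add_one_le_exp (-(1 / (2 * k : ℝ))); linarith
    have h2 : (0 : ℝ) ≤ 1 - 1 / (2 * k : ℝ) := by
      rw [sub_nonneg, div_le_one (by positivity)]
      have : (1 : ℝ) ≤ k := by exact_mod_cast hk
      linarith
    calc _ ≤ (Real.exp (-(1 / (2 * k)))) ^ n := by gcongr
      _ = _ := by rw [← Real.exp_nat_mul]; congr 1; ring
  refine (measureReal_mono hsub).trans ?_
  have hfin := hmk.trans hub
  have : Real.exp (-(n / (2 * k) : ℝ)) = Real.exp (-(0.7 * (n / (2 * k)))) * Real.exp (-(0.15 * (n / k))) := by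
    rw [← Real.exp_add]; congr 1; field_simp; norm_num
  rw [this] at hfin
  exact le_of_mul_le_mul_left hfin (Real.exp_pos _)

end Prob
end SBM


namespace SBM

lemma size_facts (n k : ℝ) (hn : 10 ^ 8 < n) (hk : 1 ≤ k) (p q : ℝ) (hq : 0 ≤ q) (hpq : q < p)
    (hp : p ≤ 1) (hL : 1 ≤ Real.log n)
    (hsize : n ≥ 10 ^ 8 * k *
          ((Real.sqrt (k * p) * (Real.log n) ^ 6 + Real.sqrt (Real.log n)) /
            (p - q)) ^ 2) :
    1 ≤ n * p ∧ 10 ^ 8 * Real.log n ≤ n / k ∧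
      7200 * (Real.log n ^ 2 * Real.sqrt (n * p)) ≤ (p - q) * (n / k) := by
  set L := Real.log n with hLd
  have hd : 0 < p - q := by linarith
  have hp0 : 0 < p := by linarith
  have hn0 : 0 < n := by linarith
  rw [ge_iff_le, div_pow, mul_div_assoc', div_le_iff₀ (by positivity)] at hsize
  have hX : Real.sqrt (k * p) ^ 2 = k * p := Real.sq_sqrt (by positivity)
  have hY : Real.sqrt L ^ 2 = L := Real.sq_sqrt (by linarith)
  have hX0 := Real.sqrt_nonneg (k * p)
  have hY0 := Real.sqrt_nonneg L
  have h1 : k * p * L ^ 12 + L ≤ (Real.sqrt (k * p) * L ^ 6 + Real.sqrt L) ^ 2 := by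
    have : 0 ≤ Real.sqrt (k * p) * L ^ 6 * Real.sqrt L := by positivity
    calc k * p * L ^ 12 + L = Real.sqrt (k * p) ^ 2 * L ^ 12 + Real.sqrt L ^ 2 := by rw [hX, hY]
      _ ≤ _ := by nlinarith
  have h2 : 10 ^ 8 * k * (k * p * L ^ 12 + L) ≤ n * (p - q) ^ 2 :=
    le_trans (by gcongr) hsize
  have hL12 : 1 ≤ L ^ 12 := one_le_pow₀ hL
  have hdp : p - q ≤ p := by linarith
  have h3 : 10 ^ 8 * k ^ 2 * p * L ^ 12 ≤ n * (p - q) ^ 2 := by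
    have : 0 ≤ k * L := by positivity
    nlinarith
  refine ⟨?_, ?_, ?_⟩
  · have h4 : n * (p - q) ^ 2 ≤ n * p * p := by
      have : (p - q) ^ 2 ≤ p ^ 2 := by gcongr
      nlinarith
    have h5 : p ≤ 10 ^ 8 * k ^ 2 * p * L ^ 12 := by
      have hk2 : 1 ≤ k ^ 2 := one_le_pow₀ hk
      have : 1 ≤ 10 ^ 8 * k ^ 2 * L ^ 12 := by
        have := one_le_mul_of_one_le_of_one_le hk2 hL12
        linarith
      nlinarith
    nlinarith
  · rw [le_div_iff₀ (by positivity)]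
    have h4 : n * (p - q) ^ 2 ≤ n := by
      have : (p - q) ^ 2 ≤ 1 := by apply pow_le_one₀ <;> linarith
      nlinarith
    have : 0 ≤ k * (k * p * L ^ 12) := by positivity
    nlinarith
  · apply le_of_sq_le_sq _ (by positivity)
    rw [mul_pow, mul_pow, Real.sq_sqrt (by positivity), mul_pow, div_pow, mul_div_assoc',
      le_div_iff₀ (by positivity)]
    have hL4 : (L ^ 2) ^ 2 ≤ L ^ 12 := by
      rw [← pow_mul]; exact pow_le_pow_right₀ hL (by norm_num)
    calc 7200 ^ 2 * ((L ^ 2) ^ 2 * (n * p)) * k ^ 2 ≤ 10 ^ 8 * (L ^ 12 * (n * p)) * k ^ 2 := by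
          gcongr; norm_num
      _ = n * (10 ^ 8 * k ^ 2 * p * L ^ 12) := by ring
      _ ≤ n * (n * (p - q) ^ 2) := by gcongr
      _ = _ := by ring

end SBM

open SBM in
/-- Main theorem: the vanilla-SVD representation is clear-cut in the
SSBM. There is a constant `C > 0` such that: for the SSBM with `n` vertices assigned
independently and uniformly to `k` clusters and edge noise as in the model, if
`σ² = max{p(1−p), q(1−q)} ≥ C log n / n` and
`n ≥ C·k·((√(kp)·(log n)⁶ + √(log n))/(p−q))²`, then with probability at least `1 − C/n`,
with `Δ = 0.8(p−q)√(n/k)`: vertices in the same cluster have SVD-representations at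
distance `≤ Δ/4` and vertices in different clusters at distance `≥ Δ` (hence
`ClusterByDistance` recovers all clusters). -/
theorem vanilla_svd_clear_cut :
    ∃ C > (0 : ℝ),
      ∀ (n k : ℕ) (hn : 0 < n) (hk : 0 < k)
        (p q : ℝ) (hq : 0 ≤ q) (hpq : q < p) (hp : p ≤ 1)
        (Ω : Type) (_ : MeasureSpace Ω) (_ : IsProbabilityMeasure (ℙ : Measure Ω))
        (cl : Ω → Fin n → Fin k) (U : Ω → EIdx n → ℝ)
        (hmeasc : ∀ v : Fin n, Measurable fun ω => cl ω v)
        (hmeasU : ∀ e : EIdx n, Measurable fun ω => U ω e)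
        (hindep : iIndepFun (m := mixMS n k) (mixFam cl U) ℙ)
        (hunifc : ∀ (v : Fin n) (j : Fin k), ℙ {ω : Ω | cl ω v = j} = (k : ENNReal)⁻¹)
        (hunifU : ∀ e : EIdx n,
          Measure.map (fun ω => U ω e) ℙ = volume.restrict (Set.Ico (0 : ℝ) 1))
        (hσ : max (p * (1 - p)) (q * (1 - q)) ≥ C * Real.log n / n)
        (hsize : (n : ℝ) ≥ C * k *
          ((Real.sqrt ((k : ℝ) * p) * (Real.log n) ^ 6 + Real.sqrt (Real.log n)) /
            (p - q)) ^ 2),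
        ENNReal.ofReal (1 - C / (n : ℝ)) ≤
          ℙ {ω : Ω |
            ∀ (lam : Fin n → ℝ) (v : Fin n → Fin n → ℝ),
              IsSpectralDecomp
                (meanMatrix n k p q (cl ω) + noiseOf p q (cl ω) (U ω)) lam v →
              ∀ u w : Fin n,
                (cl ω u = cl ω w →
                  SBM.enorm ((projTop k v).mulVec (column
                        (meanMatrix n k p q (cl ω) + noiseOf p q (cl ω) (U ω)) u) -
                      (projTop k v).mulVec (column
                        (meanMatrix n k p q (cl ω) + noiseOf p q (cl ω) (U ω)) w)) ≤
                    0.8 * (p - q) * Real.sqrt ((n : ℝ) / k) / 4) ∧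
                (cl ω u ≠ cl ω w →
                  0.8 * (p - q) * Real.sqrt ((n : ℝ) / k) ≤
                    SBM.enorm ((projTop k v).mulVec (column
                        (meanMatrix n k p q (cl ω) + noiseOf p q (cl ω) (U ω)) u) -
                      (projTop k v).mulVec (column
                        (meanMatrix n k p q (cl ω) + noiseOf p q (cl ω) (U ω)) w)))} := by
  refine ⟨10 ^ 8, by norm_num, ?_⟩
  intro n k hn hk p q hq hpq hp Ω _ _ cl U hmeasc hmeasU hindep hunifc hunifU _ hsize
  have hn0 : (0 : ℝ) < n := by exact_mod_cast hn
  have hk0 : (0 : ℝ) < k := by exact_mod_cast hk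
  have hk1 : (1 : ℝ) ≤ k := by exact_mod_cast hk
  rcases le_or_gt (n : ℝ) (10 ^ 8) with hsmall | hbig
  · rw [ENNReal.ofReal_of_nonpos]
    · exact zero_le
    · rw [sub_nonpos, le_div_iff₀ hn0]; linarith
  set L := Real.log n with hLd
  have hL3 : 3 ≤ L := by
    rw [hLd, Real.le_log_iff_exp_le hn0]
    have : Real.exp 3 = Real.exp 1 ^ 3 := by rw [← Real.exp_nat_mul]; norm_num
    rw [this]
    have h1 := Real.exp_one_lt_d9
    calc Real.exp 1 ^ 3 ≤ (3 : ℝ) ^ 3 := by gcongr; linarith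
      _ ≤ (n : ℝ) := by linarith
  obtain ⟨hnp, hnk, hsep⟩ := size_facts n k hbig hk1 p q hq hpq hp (by linarith) hsize
  rw [← hLd] at hnk hsep
  obtain ⟨j0, hj1, hj2⟩ := exists_nat_pow_near (x := L) (y := 2) (by linarith) (by norm_num)
  set j := j0 + 1 with hj
  obtain ⟨A, hAdef⟩ : ∃ A : ℕ, A = 2 ^ j := ⟨_, rfl⟩
  have hAL : L ≤ A := by rw [hAdef]; push_cast; exact hj2.le
  have hA2 : (A : ℝ) ≤ 2 * L := by rw [hAdef, hj]; push_cast; rw [pow_succ]; linarith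
  have hA0 : A ≠ 0 := by rw [hAdef]; positivity
  have hn4 : (n : ℝ) ≤ 4 ^ A := by
    calc (n : ℝ) = Real.exp L := (Real.exp_log hn0).symm
      _ ≤ Real.exp A := Real.exp_le_exp.2 hAL
      _ = Real.exp 1 ^ A := by rw [← Real.exp_nat_mul]; simp
      _ ≤ 4 ^ A := by
        gcongr
        have h1 := Real.exp_one_lt_d9
        linarith
  set s := Real.sqrt (n * p) with hs
  have hs1 : 1 ≤ s := by rw [hs, Real.one_le_sqrt]; exact hnp
  set T1 : ℝ := 8 * ((2 * A + 1 : ℕ) : ℝ) * s with hT1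
  set τ : ℝ := 8 * ((2 * (A * A) + 1 : ℕ) : ℝ) * s with hτ
  have hT1τ : 2 * T1 ≤ τ := by
    rw [hT1, hτ]; push_cast
    have h3A : (3 : ℝ) ≤ A := hL3.trans hAL
    have : 2 * (2 * (A : ℝ) + 1) ≤ 2 * (A * A) + 1 := by nlinarith
    nlinarith
  have hT10 : 0 ≤ T1 := by positivity
  have hτ0 : 0 < τ := by rw [hτ]; positivity
  have hτ2 : 100 * τ ≤ (p - q) * (n / k) := by
    refine le_trans ?_ hsep
    rw [hτ]; push_cast
    have : 2 * ((A : ℝ) * A) + 1 ≤ 9 * L ^ 2 := by nlinarith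
    nlinarith
  have hhalf : (1 / 2 : ℝ) ^ A ≤ Real.sqrt (2 * k / n) := by
    apply Real.le_sqrt_of_sq_le
    rw [← pow_mul, mul_comm, pow_mul, le_div_iff₀ hn0]
    have e4 : ((1 / 2 : ℝ) ^ 2) ^ A = 1 / 4 ^ A := by rw [← _root_.one_div_pow]; norm_num
    rw [e4, one_div_mul_eq_div]
    have : (n : ℝ) / 4 ^ A ≤ 1 := (div_le_one (by positivity)).2 hn4
    linarith

  have hbadN : (ℙ : Measure Ω).real {ω | noiseOf p q (cl ω) (U ω) ∈ badN (cl ω) T1 τ A} ≤ 3 / n := by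
    refine bad_total p q cl U hmeasc (indep_cl_U cl U hmeasc hmeasU hindep) T1 τ A _ fun c => ?_
    refine (noise_tail hn p q hq hpq hp hnp U hmeasU (indep_U cl U hindep) hunifU c A hA0).trans ?_
    have h64 : (1 / 64 : ℝ) ^ A ≤ 1 / (n : ℝ) ^ 3 := by
      rw [one_div, inv_pow, ← one_div]
      apply one_div_le_one_div_of_le (by positivity)
      calc (n : ℝ) ^ 3 ≤ (4 ^ A) ^ 3 := by gcongr
        _ = 64 ^ A := by rw [← pow_mul, mul_comm, pow_mul]; norm_num
    have hLn : L ≤ n := by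
      have := Real.log_le_sub_one_of_pos hn0; linarith
    have hA3 : (A : ℝ) + 1 ≤ 3 * n := by linarith
    calc (n : ℝ) * (A + 1) * (1 / 64 : ℝ) ^ A ≤ n * (3 * n) * (1 / (n : ℝ) ^ 3) := by gcongr
      _ = 3 / n := by field_simp
  have hbadC : (ℙ : Measure Ω).real (⋃ i ∈ (Finset.univ : Finset (Fin k)),
      {ω | ¬ (n : ℝ) / (2 * k) ≤ clusterSize (cl ω) i}) ≤ 1 / n := by
    refine (measureReal_biUnion_finset_le _ _).trans ?_
    calc _ ≤ ∑ i : Fin k, Real.exp (-(0.15 * (n / k))) := by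
          gcongr with i
          exact cl_tail hk cl hmeasc (indep_cl cl U hindep) hunifc i
      _ = k * Real.exp (-(0.15 * (n / k))) := by simp
      _ ≤ n * Real.exp (-(2 * L)) := by
          have hkn : (k : ℝ) ≤ n := by
            rw [le_div_iff₀ hk0] at hnk
            have : (1 : ℝ) ≤ 10 ^ 8 * L := by linarith
            calc (k : ℝ) = 1 * k := by ring
              _ ≤ 10 ^ 8 * L * k := by gcongr
              _ ≤ n := hnk
          have hex : Real.exp (-(0.15 * (n / k))) ≤ Real.exp (-(2 * L)) :=
            Real.exp_le_exp.2 (by norm_num at hnk ⊢; linarith)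
          exact mul_le_mul hkn hex (Real.exp_pos _).le hn0.le
      _ = 1 / n := by
          have : Real.exp (-(2 * L)) = 1 / (n * n) := by
            rw [Real.exp_neg, two_mul, Real.exp_add, hLd, Real.exp_log hn0]; simp
          rw [this]; field_simp
  set bad : Set Ω := {ω | noiseOf p q (cl ω) (U ω) ∈ badN (cl ω) T1 τ A} ∪
    ⋃ i ∈ (Finset.univ : Finset (Fin k)), {ω | ¬ (n : ℝ) / (2 * k) ≤ clusterSize (cl ω) i} with hbad
  have hbadP : (ℙ : Measure Ω).real bad ≤ 4 / n := by
    refine (measureReal_union_le _ _).trans ?_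
    calc _ ≤ 3 / (n : ℝ) + 1 / n := add_le_add hbadN hbadC
      _ = 4 / n := by ring
  have hgood : ∀ G : Set Ω, badᶜ ⊆ G → ENNReal.ofReal (1 - 10 ^ 8 / (n : ℝ)) ≤ ℙ G := by
    intro G hG
    have h1 : (1 : ENNReal) ≤ ℙ G + ℙ bad := by
      calc (1 : ENNReal) = ℙ (Set.univ : Set Ω) := measure_univ.symm
        _ ≤ ℙ (G ∪ bad) := measure_mono (by
            intro ω _
            by_cases h : ω ∈ bad
            · exact Or.inr h
            · exact Or.inl (hG h))
        _ ≤ _ := measure_union_le _ _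
    have h2 : (1 : ℝ) ≤ (ℙ : Measure Ω).real G + (ℙ : Measure Ω).real bad := by
      rw [measureReal_def, measureReal_def, ← ENNReal.toReal_add (measure_ne_top _ _) (measure_ne_top _ _)]
      rw [← ENNReal.toReal_one]
      exact ENNReal.toReal_mono (by finiteness) h1
    apply ENNReal.ofReal_le_of_le_toReal
    have h3 : 4 / (n : ℝ) ≤ 10 ^ 8 / n := by gcongr; norm_num
    have h4 : (ℙ G).toReal = (ℙ : Measure Ω).real G := rfl
    rw [h4]
    linarith
  apply hgood
  intro ω hω
  simp only [hbad, Set.mem_compl_iff, Set.mem_union, not_or, Set.mem_iUnion, Finset.mem_univ, exists_prop,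
    true_and, not_exists] at hω
  obtain ⟨hω1, hω2⟩ := hω
  have hsz : ∀ i, (n : ℝ) / (2 * k) ≤ clusterSize (cl ω) i := fun i => not_not.1 (hω2 i)
  have hsym := noiseOf_symm p q (cl ω) (U ω)
  rw [hAdef] at hn4
  have hω1' : noiseOf p q (cl ω) (U ω) ∉ badN (cl ω) T1 τ (2 ^ j) := by
    rw [← hAdef]; exact hω1
  obtain ⟨hE, hS⟩ := good_of_not_bad (cl ω) _ hsym j T1 τ hT10 hT1τ (by exact_mod_cast hn4) hω1'
  intro lam v hsp u w
  exact clear_cut_det hn hk p q hq hpq (cl ω) hsz _ hsym τ hτ0 hτ2 hE A hhalf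
    (by rw [hAdef]; exact hS) lam v hsp u w
end

section
/- Suppose n ≥ 3, the partition is balanced, E ∈ ℝ^{V×V} is any symmetric matrix with ‖E‖₂ ≤ 0.01·(p−q)·n/k, and Ĝ := G + E. Then for every vertex u ∈ V, ‖(P_{Ĝ_k} − I)·G_u‖ ≤ 0.04·(p−q)·√(n/k). -/
open MeasureTheory ProbabilityTheory Matrix Finset

namespace SBMaux
open SBM

lemma enorm_eq {m : Type*} [Fintype m] (x : m → ℝ) : SBM.enorm x = ‖WithLp.toLp 2 x‖ := by
  simp [SBM.enorm, EuclideanSpace.norm_eq]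

lemma dot_eq {m : Type*} [Fintype m] (x : m → ℝ) : x ⬝ᵥ x = ‖WithLp.toLp 2 x‖ ^ 2 := by
  rw [EuclideanSpace.norm_sq_eq]
  simp [dotProduct, sq]

lemma norm_mulVec {n : ℕ} (E : Matrix (Fin n) (Fin n) ℝ) (x : Fin n → ℝ) :
    ‖WithLp.toLp 2 (E *ᵥ x)‖ ≤ specNorm E * ‖WithLp.toLp 2 x‖ := by
  have := (Matrix.toEuclideanCLM (𝕜 := ℝ) E).le_opNorm (WithLp.toLp 2 x)
  simpa [specNorm] using this

lemma dot_mulVec {n : ℕ} (E : Matrix (Fin n) (Fin n) ℝ) (x : Fin n → ℝ) :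
    (E *ᵥ x) ⬝ᵥ (E *ᵥ x) ≤ specNorm E ^ 2 * (x ⬝ᵥ x) := by
  rw [dot_eq, dot_eq, ← mul_pow]
  exact pow_le_pow_left₀ (norm_nonneg _) (norm_mulVec E x) 2

lemma quad_abs {n : ℕ} (E : Matrix (Fin n) (Fin n) ℝ) (x : Fin n → ℝ) :
    |x ⬝ᵥ (E *ᵥ x)| ≤ specNorm E * (x ⬝ᵥ x) := by
  have h := abs_real_inner_le_norm (WithLp.toLp 2 x) (WithLp.toLp 2 (E *ᵥ x))
  rw [EuclideanSpace.inner_eq_star_dotProduct] at h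
  simp only [star_trivial] at h
  rw [dotProduct_comm] at h
  refine h.trans ?_
  rw [dot_eq]
  nlinarith [norm_mulVec E x, norm_nonneg (WithLp.toLp 2 x)]

lemma parseval {n : ℕ} (v : Fin n → Fin n → ℝ)
    (hv : ∀ i j, dotProduct (v i) (v j) = if i = j then (1 : ℝ) else 0) (x : Fin n → ℝ) :
    ∑ i, (v i ⬝ᵥ x) ^ 2 = x ⬝ᵥ x := by
  have h1 : (Matrix.of v) * (Matrix.of v)ᵀ = 1 := by
    ext i j
    rw [Matrix.mul_apply, Matrix.one_apply, ← hv i j]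
    rfl
  have h2 := mul_eq_one_comm.mp h1
  have h3 : ∑ i, (v i ⬝ᵥ x) ^ 2 = (Matrix.of v *ᵥ x) ⬝ᵥ (Matrix.of v *ᵥ x) := by
    simp only [dotProduct, sq]; rfl
  rw [h3, Matrix.dotProduct_mulVec, Matrix.vecMul_mulVec]
  rw [← Matrix.dotProduct_mulVec, h2, Matrix.one_mulVec]

lemma dot_sum_vec {n : ℕ} (s : Finset (Fin n)) (c : Fin n → ℝ) (v : Fin n → Fin n → ℝ)
    (hv : ∀ i j, dotProduct (v i) (v j) = if i = j then (1 : ℝ) else 0) (x : Fin n → ℝ)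
    (i : Fin n) :
    v i ⬝ᵥ ((∑ j ∈ s, c j • Matrix.vecMulVec (v j) (v j)) *ᵥ x)
      = if i ∈ s then c i * (v i ⬝ᵥ x) else 0 := by
  rw [Matrix.sum_mulVec, dotProduct_sum]
  simp [Matrix.smul_mulVec, Matrix.vecMulVec_mulVec, hv]

/-- quadratic form through the decomposition -/
lemma quad_eq {n : ℕ} (A : Matrix (Fin n) (Fin n) ℝ) (lam : Fin n → ℝ) (v : Fin n → Fin n → ℝ)
    (h : IsSpectralDecomp A lam v) (x : Fin n → ℝ) :
    x ⬝ᵥ (A *ᵥ x) = ∑ i, lam i * (v i ⬝ᵥ x) ^ 2 := by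
  obtain ⟨-, hv, rfl⟩ := h
  rw [Matrix.sum_mulVec, dotProduct_sum]
  refine Finset.sum_congr rfl fun i _ => ?_
  simp [Matrix.smul_mulVec, Matrix.vecMulVec_mulVec, dotProduct_comm x (v i), sq]

lemma mean_mulVec {n k : ℕ} (p q : ℝ) (cl : Fin n → Fin k) (x : Fin n → ℝ) (u : Fin n) :
    (meanMatrix n k p q cl *ᵥ x) u =
      (p - q) * (∑ w with cl w = cl u, x w) + q * ∑ w, x w := by
  simp only [Matrix.mulVec, dotProduct, meanMatrix, Matrix.of_apply]
  rw [Finset.sum_filter, Finset.mul_sum, Finset.mul_sum, ← Finset.sum_add_distrib]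
  refine Finset.sum_congr rfl fun w _ => ?_
  by_cases h : cl u = cl w
  · simp [h]; ring
  · simp [h, Ne.symm h]

lemma mean_psd {n k : ℕ} (p q : ℝ) (hq : 0 ≤ q) (hpq : q < p) (cl : Fin n → Fin k)
    (x : Fin n → ℝ) : 0 ≤ x ⬝ᵥ (meanMatrix n k p q cl *ᵥ x) := by
  have : x ⬝ᵥ (meanMatrix n k p q cl *ᵥ x) =
      (p - q) * ∑ i, (∑ w with cl w = i, x w) ^ 2 + q * (∑ w, x w) ^ 2 := by
    simp only [dotProduct, mean_mulVec, mul_add, Finset.sum_add_distrib]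
    congr 1
    · rw [← Finset.sum_fiberwise (s := Finset.univ) (g := cl), Finset.mul_sum]
      refine Finset.sum_congr rfl fun i _ => ?_
      rw [sq, Finset.sum_mul (s := Finset.univ.filter fun w => cl w = i), Finset.mul_sum]
      refine Finset.sum_congr rfl fun w hw => ?_
      rw [(Finset.mem_filter.mp hw).2]
      ring
    · rw [← Finset.sum_mul]; ring
  rw [this]
  have : 0 ≤ p - q := by linarith
  positivity

lemma small_eig {n k : ℕ} (p q : ℝ) (hq : 0 ≤ q) (hpq : q < p) (cl : Fin n → Fin k)
    (E : Matrix (Fin n) (Fin n) ℝ) (lam : Fin n → ℝ) (v : Fin n → Fin n → ℝ)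
    (hdec : IsSpectralDecomp (meanMatrix n k p q cl + E) lam v) (i : Fin n) (hi : k ≤ (i : ℕ)) :
    |lam i| ≤ specNorm E := by
  have hanti := hdec.1
  have hv := hdec.2.1
  rw [abs_le]
  constructor
  · have h1 := quad_eq _ _ _ hdec (v i)
    rw [Matrix.add_mulVec, dotProduct_add] at h1
    simp [hv] at h1
    have h2 := mean_psd p q hq hpq cl (v i)
    have h3 := (abs_le.mp (quad_abs E (v i))).1
    rw [hv] at h3
    simp at h3
    linarith
  · have hkn : k + 1 ≤ n := by omega
    let f : (Fin (k+1) → ℝ) →ₗ[ℝ] (Fin n → ℝ) :=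
      ∑ j, (LinearMap.proj j).smulRight (v (Fin.castLE hkn j))
    have hf : ∀ c, f c = ∑ j, c j • v (Fin.castLE hkn j) := by
      intro c; simp [f]
    let g : (Fin n → ℝ) →ₗ[ℝ] (Fin k → ℝ) :=
      LinearMap.pi fun a => ∑ w with cl w = a, LinearMap.proj w
    have hg : ∀ x a, g x a = ∑ w with cl w = a, x w := by
      intro x a; simp [g]
    have hker : LinearMap.ker (g ∘ₗ f) ≠ ⊥ := LinearMap.ker_ne_bot_of_finrank_lt (by simp)
    obtain ⟨c, hc, hc0⟩ := (Submodule.ne_bot_iff _).mp hker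
    have hgx : ∀ a, ∑ w with cl w = a, f c w = 0 := by
      intro a
      rw [← hg]
      exact congrFun (LinearMap.mem_ker.mp hc) a
    have hGx : meanMatrix n k p q cl *ᵥ f c = 0 := by
      ext u
      rw [mean_mulVec, hgx, ← Finset.sum_fiberwise (s := Finset.univ) (g := cl)]
      simp [hgx]
    have hdot : ∀ j : Fin (k+1), v (Fin.castLE hkn j) ⬝ᵥ f c = c j := by
      intro j
      rw [hf, dotProduct_sum]
      simp [hv, Fin.ext_iff]
      simp [← Fin.ext_iff]
    have hdot0 : ∀ j : Fin n, k < (j : ℕ) → v j ⬝ᵥ f c = 0 := by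
      intro j hj
      rw [hf, dotProduct_sum]
      refine Finset.sum_eq_zero fun a _ => ?_
      have : j ≠ Fin.castLE hkn a := by
        intro h
        have := congrArg Fin.val h
        simp at this
        omega
      simp [hv, this]
    have hpos : 0 < f c ⬝ᵥ f c := by
      rw [← parseval v hv]
      obtain ⟨j, hj⟩ := Function.ne_iff.mp hc0
      refine Finset.sum_pos' (fun _ _ => sq_nonneg _) ⟨Fin.castLE hkn j, Finset.mem_univ _, ?_⟩
      rw [hdot]
      exact sq_pos_of_ne_zero hj
    have h1 := quad_eq _ _ _ hdec (f c)
    rw [Matrix.add_mulVec, hGx, zero_add] at h1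
    have h2 : lam i * (f c ⬝ᵥ f c) ≤ ∑ j, lam j * (v j ⬝ᵥ f c) ^ 2 := by
      rw [← parseval v hv, Finset.mul_sum]
      refine Finset.sum_le_sum fun j _ => ?_
      by_cases hj : k < (j : ℕ)
      · simp [hdot0 j hj]
      · exact mul_le_mul_of_nonneg_right (hanti (Fin.le_def.mpr (by omega))) (sq_nonneg _)
    have h3 := (abs_le.mp (quad_abs E (f c))).2
    exact le_of_mul_le_mul_right (by linarith) hpos

end SBMaux

open SBM in
/-- If `n ≥ 3`, the partition is balanced, `E` is symmetric with
`‖E‖₂ ≤ 0.01·(p−q)·n/k` and `Ĝ = G + E`, then for every vertex `u`,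
`‖(P_{Ĝ_k} − I)·G_u‖ ≤ 0.04·(p−q)·√(n/k)`. -/
theorem deviation_column_bound (n k : ℕ) (hn : 3 ≤ n) (hk : 0 < k)
    (p q : ℝ) (hq : 0 ≤ q) (hpq : q < p) (hp : p ≤ 1)
    (cl : Fin n → Fin k) (hbal : Balanced n k cl)
    (E : Matrix (Fin n) (Fin n) ℝ) (hE : E.IsSymm)
    (hEnorm : specNorm E ≤ 0.01 * (p - q) * ((n : ℝ) / k))
    (lam : Fin n → ℝ) (v : Fin n → Fin n → ℝ)
    (hdec : IsSpectralDecomp (meanMatrix n k p q cl + E) lam v) :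
    ∀ u : Fin n,
      SBM.enorm ((projTop k v - 1).mulVec (column (meanMatrix n k p q cl) u)) ≤
        0.04 * (p - q) * Real.sqrt ((n : ℝ) / k) := by
  intro u
  have hv := hdec.2.1
  set m : ℝ := (n : ℝ) / k with hm
  have hmpos : 0 < m := by
    have : (0:ℝ) < n := by exact_mod_cast (by omega : 0 < n)
    have : (0:ℝ) < k := by exact_mod_cast hk
    positivity
  set s : ℝ := (clusterSize cl (cl u) : ℝ) with hs
  have hlog : 1 ≤ Real.log n := by
    rw [Real.le_log_iff_exp_le (by exact_mod_cast (by omega : 0 < n))]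
    have : (3:ℝ) ≤ n := by exact_mod_cast hn
    linarith [Real.exp_one_lt_d9]
  have hs4 : m / 4 ≤ s := by
    have h1 := (hbal (cl u)).1
    have h2 : 1 / (16 * Real.log n) ≤ 1 / 16 := by
      apply one_div_le_one_div_of_le <;> linarith
    have h3 : (1 - 1/16) * m ≤ (1 - 1 / (16 * Real.log n)) * m :=
      mul_le_mul_of_nonneg_right (by linarith) hmpos.le
    linarith
  have hspos : 0 < s := by linarith
  set e := specNorm E with he
  have he0 : 0 ≤ e := norm_nonneg _
  let w : Fin n → ℝ := fun x => if cl x = cl u then s⁻¹ else 0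
  have hww : w ⬝ᵥ w = s⁻¹ := by
    simp only [w, dotProduct, ite_mul, zero_mul, mul_ite, mul_zero]
    rw [← Finset.sum_filter]
    rw [Finset.sum_congr rfl (g := fun _ => s⁻¹ * s⁻¹)
      (fun x hx => by simp [(Finset.mem_filter.mp hx).2])]
    rw [Finset.sum_const, nsmul_eq_mul]
    change s * _ = _
    field_simp
  have hGw : column (meanMatrix n k p q cl) u = meanMatrix n k p q cl *ᵥ w := by
    ext x
    simp only [column, Matrix.mulVec, dotProduct, w, mul_ite, mul_zero]
    rw [← Finset.sum_filter]
    rw [Finset.sum_congr rfl (g := fun _ => meanMatrix n k p q cl x u * s⁻¹)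
      (fun y hy => by simp [meanMatrix, (Finset.mem_filter.mp hy).2])]
    rw [Finset.sum_const, nsmul_eq_mul]
    change _ = s * _
    field_simp
  rw [hGw]
  set y := meanMatrix n k p q cl *ᵥ w with hy
  have hcoord : ∀ i, (v i ⬝ᵥ ((projTop k v - 1) *ᵥ y)) ^ 2 ≤
      2 * e ^ 2 * (v i ⬝ᵥ w) ^ 2 + 2 * (v i ⬝ᵥ (E *ᵥ w)) ^ 2 := by
    intro i
    have h1 := SBMaux.dot_sum_vec (Finset.univ.filter (fun i : Fin n => (i : ℕ) < k))
      (fun _ => 1) v hv y i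
    simp only [one_smul, one_mul] at h1
    rw [Matrix.sub_mulVec, dotProduct_sub, Matrix.one_mulVec, projTop, h1]
    by_cases hi : (i : ℕ) < k
    · simp [hi]; positivity
    · simp only [Finset.mem_filter, Finset.mem_univ, true_and, hi, if_false]
      have h2 := SBMaux.dot_sum_vec Finset.univ lam v hv w i
      rw [← hdec.2.2, Matrix.add_mulVec, dotProduct_add] at h2
      simp only [Finset.mem_univ, if_true] at h2
      have h3 : v i ⬝ᵥ y = lam i * (v i ⬝ᵥ w) - v i ⬝ᵥ (E *ᵥ w) := by linarith
      have h4 := SBMaux.small_eig p q hq hpq cl E lam v hdec i (by omega)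
      have h5 : lam i ^ 2 ≤ e ^ 2 := sq_le_sq' (abs_le.mp h4).1 (abs_le.mp h4).2
      have h6 := mul_le_mul_of_nonneg_right h5 (sq_nonneg (v i ⬝ᵥ w))
      rw [h3]
      nlinarith [sq_nonneg (lam i * (v i ⬝ᵥ w) + v i ⬝ᵥ (E *ᵥ w))]
  have hsum := Finset.sum_le_sum (fun i (_ : i ∈ Finset.univ) => hcoord i)
  rw [SBMaux.parseval v hv, Finset.sum_add_distrib, ← Finset.mul_sum, ← Finset.mul_sum,
    SBMaux.parseval v hv, SBMaux.parseval v hv] at hsum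
  have hEw := SBMaux.dot_mulVec E w
  rw [hww] at hsum hEw
  rw [SBMaux.enorm_eq]
  refine abs_le_of_sq_le_sq' ?_ (by have : 0 ≤ p - q := by linarith
                                    positivity) |>.2
  rw [← SBMaux.dot_eq, mul_pow, Real.sq_sqrt hmpos.le]
  have he2 : e ^ 2 ≤ (0.01 * (p - q) * m) ^ 2 := pow_le_pow_left₀ he0 hEnorm 2
  have hsi : s⁻¹ * m ≤ 4 := by
    rw [inv_mul_le_iff₀ hspos]; linarith
  have hsi0 : 0 < s⁻¹ := inv_pos.mpr hspos
  calc _ ≤ 4 * (e ^ 2 * s⁻¹) := by linarith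
    _ ≤ 4 * ((0.01 * (p - q) * m) ^ 2 * s⁻¹) := by gcongr
    _ = 4 * (0.01 * (p - q)) ^ 2 * m * (s⁻¹ * m) := by ring
    _ ≤ 4 * (0.01 * (p - q)) ^ 2 * m * 4 := by gcongr
    _ = _ := by ring
end
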